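/- Let a0 ≥ 1, b0 > 0, and let g : ℝ² → ℝ satisfy the (a0,b0)-foliation conditions. Let ψ0 : ℝ → ℝ be a Schwartz function supported in {t : 1/2 ≤ |t| ≤ 5/2} such that Σ_{k∈ℤ} ψ0(2^{−k} t) = 1 for every t ≠ 0, and let φ_k : ℝ → ℂ be the inverse Fourier transform of t ↦ ψ0(2^{−k} t). For every q ∈ (1,∞) there is a constant C depending only on q, a0 and ψ0 such that: for every finitely supported family (f_k)_{k∈ℤ} of measurable functions on ℝ² with ‖(Σ_k |f_k|²)^{1/2}‖_{L^q(ℝ²)} < ∞, setting F_k(x,y) := f_k(g(x,y), y), one has ‖ (x,y) ↦ Σ_{k∈ℤ} (φ_k * F_k(x,·))(y) ‖_{L^q(ℝ²)} ≤ C ‖ (Σ_{k∈ℤ} |f_k|² )^{1/2} ‖_{L^q(ℝ²)}. -/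

import Mathlib

open MeasureTheory
open scoped SchwartzMap FourierTransform ENNReal NNReal

/-!
Let `Φ` be the inverse Fourier transform of `ψ₀`. For finite `S ⊆ ℤ`, the map
`(f k) ↦ ∑ k ∈ S, Φ_k * f k` is convolution with a kernel whose values are operators from `ℓ²(S)` to
`ℂ`. It is bounded on `L²` by Plancherel and Cauchy–Schwarz, because `ψ₀` vanishes at the origin and
at infinity so that `∑ₖ |ψ₀(2⁻ᵏ ξ)|²` is bounded, and it satisfies Hörmander's condition because the
contribution of the scale `k` is at most a constant times `min (2ᵏ |s|) (2ᵏ |s|)⁻¹`; both bounds are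
uniform in `S`. The Calderón–Zygmund decomposition and Marcinkiewicz interpolation then give `L^p`
bounds for `1 < p < 2`, and duality gives them for `p > 2`. The operator acts on each vertical line
separately, and the sections `x ↦ g (x, y)` distort Lebesgue measure by a factor at most `a₀`, so
Fubini transfers the one-dimensional bound to the plane.
-/

/-! ### Dyadic intervals -/

/-- The dyadic interval `[m 2ⁿ, (m + 1) 2ⁿ)` of scale `n` and position `m`. -/
def dyadicIco (n m : ℤ) : Set ℝ := Set.Ico (m * (2 : ℝ) ^ n) ((m + 1) * (2 : ℝ) ^ n)

theorem mem_dyadicIco {n m : ℤ} {x : ℝ} : x ∈ dyadicIco n m ↔ ⌊x / (2 : ℝ) ^ n⌋ = m := by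
  have h : (0 : ℝ) < (2 : ℝ) ^ n := by positivity
  rw [Int.floor_eq_iff, le_div_iff₀ h, div_lt_iff₀ h]
  rfl

theorem measurableSet_dyadicIco (n m : ℤ) : MeasurableSet (dyadicIco n m) := measurableSet_Ico

theorem volume_dyadicIco (n m : ℤ) : volume (dyadicIco n m) = ENNReal.ofReal ((2 : ℝ) ^ n) := by
  rw [dyadicIco, Real.volume_Ico]
  ring_nf

theorem floor_div_two_zpow {n n' : ℤ} (h : n ≤ n') (x : ℝ) :
    ⌊x / (2 : ℝ) ^ n'⌋ = ⌊x / (2 : ℝ) ^ n⌋ / 2 ^ (n' - n).toNat := by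
  rw [← Int.mul_cast_floor_div_cancel_of_pos (n := 2 ^ (n' - n).toNat) (by positivity)]
  congr 2
  push_cast
  rw [← zpow_natCast, Int.toNat_of_nonneg (by omega), zpow_sub₀ two_ne_zero]
  field_simp

theorem dyadicIco_subset_of_le {n n' m : ℤ} (h : n ≤ n') {x : ℝ} (hx : x ∈ dyadicIco n m) :
    dyadicIco n m ⊆ dyadicIco n' ⌊x / (2 : ℝ) ^ n'⌋ := by
  intro y hy
  rw [mem_dyadicIco] at *
  rw [floor_div_two_zpow h, floor_div_two_zpow h, hx, hy]

theorem dyadicIco_eq_Ico_center (n m : ℤ) :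
    dyadicIco n m = Set.Ico ((m + 1 / 2) * (2 : ℝ) ^ n - (2 : ℝ) ^ n / 2)
      ((m + 1 / 2) * (2 : ℝ) ^ n + (2 : ℝ) ^ n / 2) := by
  rw [dyadicIco]
  congr 1 <;> ring

theorem dyadicIco_ae_eq_closedBall (n m : ℤ) :
    dyadicIco n m =ᵐ[volume] Metric.closedBall ((m + 1 / 2) * (2 : ℝ) ^ n) ((2 : ℝ) ^ n / 2) := by
  rw [Real.closedBall_eq_Icc, dyadicIco_eq_Ico_center]
  exact Ico_ae_eq_Icc

theorem dyadicIco_subset_closedBall (n m : ℤ) :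
    dyadicIco n m ⊆ Metric.closedBall ((m + 1 / 2) * (2 : ℝ) ^ n) ((2 : ℝ) ^ n / 2) := by
  rw [Real.closedBall_eq_Icc, dyadicIco_eq_Ico_center]
  exact Set.Ico_subset_Icc_self

section Stopping

variable {E : Type*} [NormedAddCommGroup E]

theorem setLIntegral_enorm_le_add {α : Type*} [MeasurableSpace α] {μ : Measure α} {F : α → E}
    (hF : StronglyMeasurable F) (t : ℝ) (I : Set α) :
    ∫⁻ x in I, ‖F x‖ₑ ∂μ ≤
      ENNReal.ofReal t * μ I + ∫⁻ x in I ∩ {x | t < ‖F x‖}, ‖F x‖ₑ ∂μ := by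
  have hlarge : MeasurableSet {x | t < ‖F x‖} :=
    measurableSet_lt measurable_const hF.norm.measurable
  rw [← lintegral_inter_add_sdiff _ I hlarge, add_comm]
  gcongr
  calc ∫⁻ x in I \ {x | t < ‖F x‖}, ‖F x‖ₑ ∂μ
      ≤ ∫⁻ _ in I \ {x | t < ‖F x‖}, ENNReal.ofReal t ∂μ := by
        refine setLIntegral_mono measurable_const fun x hx => ?_
        rw [← ofReal_norm]
        exact ENNReal.ofReal_le_ofReal (not_lt.1 hx.2)
    _ = ENNReal.ofReal t * μ (I \ {x | t < ‖F x‖}) := by rw [setLIntegral_const]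
    _ ≤ _ := by gcongr; exact Set.sdiff_subset

theorem locallyIntegrable_of_setLIntegral_ne_top {α : Type*} [TopologicalSpace α]
    [WeaklyLocallyCompactSpace α] [MeasurableSpace α] {μ : Measure α}
    [IsFiniteMeasureOnCompacts μ] {F : α → E} (hF : StronglyMeasurable F) {t : ℝ}
    (hfin : ∫⁻ x in {x | t < ‖F x‖}, ‖F x‖ₑ ∂μ ≠ ⊤) : LocallyIntegrable F μ := by
  intro x
  obtain ⟨k, hk, hkx⟩ := exists_compact_mem_nhds x
  refine ⟨k, hkx, hF.aestronglyMeasurable, ?_⟩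
  refine (setLIntegral_enorm_le_add hF t k).trans_lt (ENNReal.add_lt_top.2
    ⟨ENNReal.mul_lt_top ENNReal.ofReal_lt_top hk.measure_lt_top, ?_⟩)
  exact (lintegral_mono_set Set.inter_subset_right).trans_lt hfin.lt_top

theorem ae_tendsto_dyadic_average {f : ℝ → ℝ} (hf : LocallyIntegrable f) :
    ∀ᵐ x : ℝ, Filter.Tendsto
      (fun j : ℕ => ⨍ y in dyadicIco (-j) ⌊x / (2 : ℝ) ^ (-j : ℤ)⌋, f y) Filter.atTop
      (nhds (f x)) := by
  filter_upwards [IsUnifLocDoublingMeasure.ae_tendsto_average volume hf 1] with x hx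
  simp only [setAverage_congr (dyadicIco_ae_eq_closedBall _ _)]
  refine hx _ _ (tendsto_nhdsWithin_iff.2 ⟨?_, .of_forall fun j => ?_⟩) (.of_forall fun j => ?_)
  · simpa [zpow_neg] using (tendsto_pow_atTop_nhds_zero_of_lt_one (r := (1 / 2 : ℝ))
      (by norm_num) (by norm_num)).div_const 2
  · exact Set.mem_Ioi.2 (by positivity)
  · rw [one_mul]
    exact dyadicIco_subset_closedBall _ _ (mem_dyadicIco.2 rfl)

/-- The average of `‖F‖` over the dyadic interval of scale `n` and position `m` exceeds `t`. -/
def IsHeavy (F : ℝ → E) (t : ℝ) (n m : ℤ) : Prop :=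
  ENNReal.ofReal t * volume (dyadicIco n m) < ∫⁻ y in dyadicIco n m, ‖F y‖ₑ

/-- Scales and positions of the Calderón–Zygmund stopping intervals of `F` at height `t`, that is,
of the maximal heavy dyadic intervals. -/
def stoppingIndices (F : ℝ → E) (t : ℝ) : Set (ℤ × ℤ) :=
  {p | IsHeavy F t p.1 p.2 ∧
    ∀ x ∈ dyadicIco p.1 p.2, ∀ n, p.1 < n → ¬IsHeavy F t n ⌊x / (2 : ℝ) ^ n⌋}

/-- The Calderón–Zygmund stopping intervals of `F` at height `t`. -/
def stoppingIco (F : ℝ → E) (t : ℝ) (p : stoppingIndices F t) : Set ℝ := dyadicIco p.1.1 p.1.2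

variable {F : ℝ → E} {t : ℝ}

theorem IsHeavy.volume_le (hF : StronglyMeasurable F) (ht : 0 < t) {n m : ℤ}
    (h : IsHeavy F t n m) :
    volume (dyadicIco n m) ≤
      ENNReal.ofReal (2 / t) * ∫⁻ x in dyadicIco n m ∩ {x | t / 2 < ‖F x‖}, ‖F x‖ₑ := by
  have hhalves : ENNReal.ofReal t = ENNReal.ofReal (t / 2) + ENNReal.ofReal (t / 2) := by
    rw [← ENNReal.ofReal_add (by positivity) (by positivity), add_halves]
  have hfin : ENNReal.ofReal (t / 2) * volume (dyadicIco n m) ≠ ⊤ := by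
    rw [volume_dyadicIco]
    finiteness
  have hlarge := h.le.trans (setLIntegral_enorm_le_add hF (t / 2) (dyadicIco n m))
  rw [hhalves, add_mul, ENNReal.add_le_add_iff_left hfin] at hlarge
  calc volume (dyadicIco n m)
      = ENNReal.ofReal (2 / t) * (ENNReal.ofReal (t / 2) * volume (dyadicIco n m)) := by
        rw [← mul_assoc, ← ENNReal.ofReal_mul (by positivity),
          show 2 / t * (t / 2) = 1 by field_simp, ENNReal.ofReal_one, one_mul]
    _ ≤ _ := by gcongr

theorem IsHeavy.exists_scale_le (hF : StronglyMeasurable F) (ht : 0 < t)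
    (hfin : ∫⁻ x in {x | t / 2 < ‖F x‖}, ‖F x‖ₑ ≠ ⊤) :
    ∃ N : ℤ, ∀ n m, IsHeavy F t n m → n ≤ N := by
  set M := ENNReal.ofReal (2 / t) * ∫⁻ x in {x | t / 2 < ‖F x‖}, ‖F x‖ₑ
  have hM : M ≠ ⊤ := ENNReal.mul_ne_top ENNReal.ofReal_ne_top hfin
  obtain ⟨N, hN⟩ := pow_unbounded_of_one_lt M.toReal (one_lt_two : (1 : ℝ) < 2)
  refine ⟨N, fun n m h => ?_⟩
  have hle : ENNReal.ofReal ((2 : ℝ) ^ n) ≤ M := by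
    rw [← volume_dyadicIco n m]
    exact (h.volume_le hF ht).trans
      (mul_le_mul_right (lintegral_mono_set Set.inter_subset_right) _)
  rw [ENNReal.ofReal_le_iff_le_toReal hM] at hle
  rw [← zpow_natCast] at hN
  exact ((zpow_lt_zpow_iff_right₀ one_lt_two).1 (hle.trans_lt hN)).le

theorem measurableSet_stoppingIco (p : stoppingIndices F t) :
    MeasurableSet (stoppingIco F t p) := measurableSet_dyadicIco _ _

theorem volume_stoppingIco_ne_top (p : stoppingIndices F t) :
    volume (stoppingIco F t p) ≠ ⊤ := by
  rw [stoppingIco, volume_dyadicIco]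
  exact ENNReal.ofReal_ne_top

theorem pairwise_disjoint_stoppingIco :
    Pairwise (Function.onFun Disjoint (stoppingIco F t)) := by
  rintro ⟨⟨n, m⟩, hp⟩ ⟨⟨n', m'⟩, hp'⟩ hne
  refine Set.disjoint_left.2 fun x hx hx' => hne ?_
  have hm : ⌊x / (2 : ℝ) ^ n⌋ = m := mem_dyadicIco.1 hx
  have hm' : ⌊x / (2 : ℝ) ^ n'⌋ = m' := mem_dyadicIco.1 hx'
  have hscale : n = n' := le_antisymm
    (not_lt.1 fun h => hp'.2 x hx' n h (hm ▸ hp.1)) (not_lt.1 fun h => hp.2 x hx n' h (hm' ▸ hp'.1))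
  subst hscale
  exact Subtype.ext (Prod.ext rfl (hm.symm.trans hm'))

-- The dyadic parent of a stopping interval is not heavy, and it is only twice as long.
theorem setLIntegral_stoppingIco_le (ht : 0 ≤ t) (p : stoppingIndices F t) :
    ∫⁻ x in stoppingIco F t p, ‖F x‖ₑ ≤
      ENNReal.ofReal (2 * t) * volume (stoppingIco F t p) := by
  obtain ⟨⟨n, m⟩, hp⟩ := p
  have hx : m * (2 : ℝ) ^ n ∈ dyadicIco n m := by
    rw [mem_dyadicIco, mul_div_cancel_right₀ _ (by positivity), Int.floor_intCast]
  have hparent := not_lt.1 (hp.2 _ hx (n + 1) (lt_add_one n))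
  refine (lintegral_mono_set (dyadicIco_subset_of_le (lt_add_one n).le hx)).trans
    (hparent.trans_eq ?_)
  simp only [stoppingIco, volume_dyadicIco]
  rw [← ENNReal.ofReal_mul ht, ← ENNReal.ofReal_mul (by positivity), zpow_add_one₀ two_ne_zero]
  ring_nf

theorem setLIntegral_iUnion_stoppingIco_le (ht : 0 ≤ t) :
    ∫⁻ x in ⋃ p, stoppingIco F t p, ‖F x‖ₑ ≤
      ENNReal.ofReal (2 * t) * volume (⋃ p, stoppingIco F t p) := by
  rw [lintegral_iUnion measurableSet_stoppingIco pairwise_disjoint_stoppingIco,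
    measure_iUnion pairwise_disjoint_stoppingIco measurableSet_stoppingIco,
    ← ENNReal.tsum_mul_left]
  exact ENNReal.tsum_le_tsum (setLIntegral_stoppingIco_le ht)

theorem volume_iUnion_stoppingIco_le (hF : StronglyMeasurable F) (ht : 0 < t) :
    volume (⋃ p, stoppingIco F t p) ≤
      ENNReal.ofReal (2 / t) * ∫⁻ x in {x | t / 2 < ‖F x‖}, ‖F x‖ₑ := by
  have hlarge : MeasurableSet {x | t / 2 < ‖F x‖} :=
    measurableSet_lt measurable_const hF.norm.measurable
  calc volume (⋃ p, stoppingIco F t p)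
      = ∑' p, volume (stoppingIco F t p) :=
        measure_iUnion pairwise_disjoint_stoppingIco measurableSet_stoppingIco
    _ ≤ ∑' p, ENNReal.ofReal (2 / t) *
          ∫⁻ x in stoppingIco F t p ∩ {x | t / 2 < ‖F x‖}, ‖F x‖ₑ :=
        ENNReal.tsum_le_tsum fun p => p.2.1.volume_le hF ht
    _ = ENNReal.ofReal (2 / t) *
          ∫⁻ x in ⋃ p, stoppingIco F t p ∩ {x | t / 2 < ‖F x‖}, ‖F x‖ₑ := by
        rw [ENNReal.tsum_mul_left,
          lintegral_iUnion fun p => (measurableSet_stoppingIco p).inter hlarge]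
        exact fun p p' h => (pairwise_disjoint_stoppingIco h).mono
          Set.inter_subset_left Set.inter_subset_left
    _ ≤ _ := mul_le_mul_right
        (lintegral_mono_set (Set.iUnion_subset fun p => Set.inter_subset_right)) _

theorem mem_iUnion_stoppingIco_of_isHeavy (hF : StronglyMeasurable F) (ht : 0 < t)
    (hfin : ∫⁻ x in {x | t / 2 < ‖F x‖}, ‖F x‖ₑ ≠ ⊤) {n : ℤ} {x : ℝ}
    (h : IsHeavy F t n ⌊x / (2 : ℝ) ^ n⌋) : x ∈ ⋃ p, stoppingIco F t p := by
  obtain ⟨N, hN⟩ := IsHeavy.exists_scale_le hF ht hfin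
  obtain ⟨k, hk, hmax⟩ := Int.exists_greatest_of_bdd
    (P := fun n => IsHeavy F t n ⌊x / (2 : ℝ) ^ n⌋) ⟨N, fun n hn => hN n _ hn⟩ ⟨n, h⟩
  have hx : x ∈ dyadicIco k ⌊x / (2 : ℝ) ^ k⌋ := mem_dyadicIco.2 rfl
  refine Set.mem_iUnion.2 ⟨⟨(k, ⌊x / (2 : ℝ) ^ k⌋), hk, fun y hy n' hn' hheavy => ?_⟩, hx⟩
  rw [mem_dyadicIco.1 (dyadicIco_subset_of_le hn'.le hx hy)] at hheavy
  exact (hmax n' hheavy).not_gt hn'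

theorem setAverage_norm_le_of_not_isHeavy (hF : LocallyIntegrable F) (ht : 0 ≤ t) {n m : ℤ}
    (h : ¬IsHeavy F t n m) : ⨍ y in dyadicIco n m, ‖F y‖ ≤ t := by
  have hint : IntegrableOn F (dyadicIco n m) :=
    (hF.integrableOn_isCompact (isCompact_closedBall _ _)).mono_set
      (dyadicIco_subset_closedBall n m)
  have hle := not_lt.1 h
  rw [← ofReal_integral_norm_eq_lintegral_enorm hint, volume_dyadicIco,
    ← ENNReal.ofReal_mul ht, ENNReal.ofReal_le_ofReal_iff (by positivity)] at hle
  rw [setAverage_eq, Measure.real, volume_dyadicIco, ENNReal.toReal_ofReal (by positivity),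
    smul_eq_mul, inv_mul_le_iff₀ (by positivity), mul_comm]
  exact hle

theorem ae_norm_le_of_notMem_stoppingIco (hF : StronglyMeasurable F) (ht : 0 < t)
    (hfin : ∫⁻ x in {x | t / 2 < ‖F x‖}, ‖F x‖ₑ ≠ ⊤) :
    ∀ᵐ x, x ∉ ⋃ p, stoppingIco F t p → ‖F x‖ ≤ t := by
  have hloc := locallyIntegrable_of_setLIntegral_ne_top hF hfin
  filter_upwards [ae_tendsto_dyadic_average fun x => (hloc x).norm] with x hx hxΩ
  exact le_of_tendsto' hx fun j => setAverage_norm_le_of_not_isHeavy hloc ht.le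
    fun h => hxΩ (mem_iUnion_stoppingIco_of_isHeavy hF ht hfin h)

end Stopping

/-! ### Removing averages along a disjoint family -/

section BadPart

variable {α ι E : Type*} [MeasurableSpace α] {μ : Measure α} [NormedAddCommGroup E]
  [NormedSpace ℝ E]

theorem enorm_setAverage_le {F : α → E} {s : Set α} {A : ℝ≥0∞}
    (h : ∫⁻ x in s, ‖F x‖ₑ ∂μ ≤ A * μ s) : ‖⨍ x in s, F x ∂μ‖ₑ ≤ A := by
  refine (enorm_integral_le_lintegral_enorm _).trans ?_
  rw [← laverage_eq', setLAverage_eq]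
  exact ENNReal.div_le_of_le_mul h

theorem enorm_setAverage_mul_measure_le {s : Set α} (hs : μ s ≠ ⊤) (F : α → E) :
    ‖⨍ x in s, F x ∂μ‖ₑ * μ s ≤ ∫⁻ x in s, ‖F x‖ₑ ∂μ := by
  rw [mul_comm, ← measure_mul_setLAverage _ hs]
  exact mul_le_mul_right (enorm_integral_le_lintegral_enorm _) _

/-- The bad part of the Calderón–Zygmund decomposition of `F` along a family of disjoint sets `I i`:
on each `I i` it is `F` minus its average over `I i`, and it vanishes elsewhere. -/
noncomputable def badPart (μ : Measure α) (I : ι → Set α) (F : α → E) (x : α) : E :=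
  ∑' i, (I i).indicator (fun x => F x - ⨍ y in I i, F y ∂μ) x

variable {I : ι → Set α} {F : α → E}

theorem badPart_of_notMem {x : α} (hx : x ∉ ⋃ i, I i) : badPart μ I F x = 0 := by
  have hx' : ∀ i, x ∉ I i := fun i hi => hx (Set.mem_iUnion_of_mem i hi)
  simp only [badPart, Set.indicator_of_notMem (hx' _), tsum_zero]

theorem hasSum_badPart_of_mem (hI : Pairwise (Function.onFun Disjoint I)) {i : ι} {x : α}
    (hx : x ∈ I i) :
    HasSum (fun j => (I j).indicator (fun x => F x - ⨍ y in I j, F y ∂μ) x)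
      (F x - ⨍ y in I i, F y ∂μ) := by
  have hne : ∀ j ≠ i, (I j).indicator (fun x => F x - ⨍ y in I j, F y ∂μ) x = 0 := fun j hj =>
    Set.indicator_of_notMem (Set.disjoint_right.1 (hI hj) hx) _
  rw [← Set.indicator_of_mem hx fun x => F x - ⨍ y in I i, F y ∂μ]
  exact hasSum_single i hne

theorem badPart_of_mem (hI : Pairwise (Function.onFun Disjoint I)) {i : ι} {x : α}
    (hx : x ∈ I i) : badPart μ I F x = F x - ⨍ y in I i, F y ∂μ :=
  (hasSum_badPart_of_mem hI hx).tsum_eq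

theorem stronglyMeasurable_badPart [Countable ι] (hF : StronglyMeasurable F)
    (hI : Pairwise (Function.onFun Disjoint I)) (hIm : ∀ i, MeasurableSet (I i)) :
    StronglyMeasurable (badPart μ I F) := by
  refine stronglyMeasurable_of_tendsto Filter.atTop (f := fun (s : Finset ι) x => ∑ i ∈ s,
      (I i).indicator (fun x => F x - ⨍ y in I i, F y ∂μ) x)
    (fun s => Finset.stronglyMeasurable_fun_sum s fun i _ =>
      (hF.sub stronglyMeasurable_const).indicator (hIm i)) (tendsto_pi_nhds.2 fun x => ?_)
  refine Summable.hasSum ?_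
  by_cases hx : ∃ i, x ∈ I i
  · exact (hasSum_badPart_of_mem hI hx.choose_spec).summable
  · push Not at hx
    simp only [Set.indicator_of_notMem (hx _), summable_zero]

theorem setIntegral_badPart [CompleteSpace E] (hI : Pairwise (Function.onFun Disjoint I)) {i : ι}
    (hIm : MeasurableSet (I i)) (hfin : μ (I i) ≠ ⊤) : ∫ x in I i, badPart μ I F x ∂μ = 0 := by
  have : IsFiniteMeasure (μ.restrict (I i)) := isFiniteMeasure_restrict.2 hfin
  rw [setIntegral_congr_fun hIm fun x hx => badPart_of_mem hI hx]
  exact integral_sub_average _ F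

theorem setLIntegral_enorm_badPart_le (hF : StronglyMeasurable F)
    (hI : Pairwise (Function.onFun Disjoint I)) {i : ι} (hfin : μ (I i) ≠ ⊤) :
    ∫⁻ x in I i, ‖badPart μ I F x‖ₑ ∂μ ≤ 2 * ∫⁻ x in I i, ‖F x‖ₑ ∂μ := by
  calc ∫⁻ x in I i, ‖badPart μ I F x‖ₑ ∂μ
      ≤ ∫⁻ x in I i, (‖F x‖ₑ + ‖⨍ y in I i, F y ∂μ‖ₑ) ∂μ :=
        setLIntegral_mono (hF.enorm.add_const _) fun x hx => by
          rw [badPart_of_mem hI hx]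
          exact enorm_sub_le
    _ = (∫⁻ x in I i, ‖F x‖ₑ ∂μ) + ‖⨍ y in I i, F y ∂μ‖ₑ * μ (I i) := by
        rw [lintegral_add_right _ measurable_const, setLIntegral_const]
    _ ≤ 2 * ∫⁻ x in I i, ‖F x‖ₑ ∂μ := by
        rw [two_mul]
        gcongr
        exact enorm_setAverage_mul_measure_le hfin F

theorem integrable_badPart [Countable ι] (hF : StronglyMeasurable F)
    (hI : Pairwise (Function.onFun Disjoint I)) (hIm : ∀ i, MeasurableSet (I i))
    (hfin : ∀ i, μ (I i) ≠ ⊤) (hFI : ∫⁻ x in ⋃ i, I i, ‖F x‖ₑ ∂μ ≠ ⊤) :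
    Integrable (badPart μ I F) μ := by
  refine (integrableOn_iff_integrable_of_support_subset fun x hx => by
    contrapose! hx
    exact Function.notMem_support.2 (badPart_of_notMem hx)).1
    ⟨(stronglyMeasurable_badPart hF hI hIm).aestronglyMeasurable, ?_⟩
  rw [HasFiniteIntegral, lintegral_iUnion hIm hI]
  refine (ENNReal.tsum_le_tsum fun i =>
    setLIntegral_enorm_badPart_le hF hI (hfin i)).trans_lt ?_
  rw [ENNReal.tsum_mul_left, ← lintegral_iUnion hIm hI]
  exact ENNReal.mul_lt_top ENNReal.ofNat_lt_top hFI.lt_top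

theorem enorm_sub_badPart_le (hI : Pairwise (Function.onFun Disjoint I)) {A : ℝ≥0∞}
    (hA : ∀ i, ∫⁻ x in I i, ‖F x‖ₑ ∂μ ≤ A * μ (I i)) {x : α} (hx : x ∈ ⋃ i, I i) :
    ‖F x - badPart μ I F x‖ₑ ≤ A := by
  obtain ⟨i, hi⟩ := Set.mem_iUnion.1 hx
  rw [badPart_of_mem hI hi, sub_sub_cancel]
  exact enorm_setAverage_le (hA i)

end BadPart

/-! ### Convolution with operator-valued kernels -/

section Kernel

variable {E F : Type*} [NormedAddCommGroup E] [NormedSpace ℂ E]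
  [NormedAddCommGroup F] [NormedSpace ℂ F]

/-- Convolution of `f` with the operator-valued kernel `K`. -/
noncomputable def kernelConv (K : ℝ → E →L[ℂ] F) (f : ℝ → E) (y : ℝ) : F :=
  ∫ z, K (y - z) (f z)

/-- Qualitative assumptions that make `kernelConv K f` converge for `f` integrable or bounded. The
estimates below do not depend on the quantities involved. -/
structure IsRegularKernel (K : ℝ → E →L[ℂ] F) : Prop where
  continuous : Continuous K
  integrable : Integrable K
  bounded : ∃ C, ∀ y, ‖K y‖ ≤ C

/-- The `Lᵖ` bound for convolution with `K`, with constant `A` for the `p`-th powers of the norms.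
-/
def StrongTypeBound (K : ℝ → E →L[ℂ] F) (p : ℝ) (A : ℝ≥0∞) : Prop :=
  ∀ f : ℝ → E, StronglyMeasurable f → ∫⁻ y, ‖kernelConv K f y‖ₑ ^ p ≤ A * ∫⁻ y, ‖f y‖ₑ ^ p

/-- Hörmander's integral smoothness condition on the kernel `K`, with constant `B`. -/
def HormanderBound (K : ℝ → E →L[ℂ] F) (B : ℝ≥0∞) : Prop :=
  ∀ s : ℝ, ∫⁻ y in {y : ℝ | 2 * |s| ≤ |y|}, ‖K (y - s) - K y‖ₑ ≤ B

variable {K : ℝ → E →L[ℂ] F} {f : ℝ → E}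

theorem stronglyMeasurable_kernel_apply (hK : Continuous K) (hf : StronglyMeasurable f) :
    StronglyMeasurable fun p : ℝ × ℝ => K (p.1 - p.2) (f p.2) :=
  isBoundedBilinearMap_apply.continuous.comp_stronglyMeasurable
    ((hK.comp (continuous_fst.sub continuous_snd)).stronglyMeasurable.prodMk
      (hf.comp_measurable measurable_snd))

theorem stronglyMeasurable_kernelConv (hK : Continuous K) (hf : StronglyMeasurable f) :
    StronglyMeasurable (kernelConv K f) :=
  (stronglyMeasurable_kernel_apply hK hf).integral_prod_right

theorem IsRegularKernel.integrable_apply_of_integrable (hK : IsRegularKernel K)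
    {μ : Measure ℝ} (hf : Integrable f μ) (y : ℝ) : Integrable (fun z => K (y - z) (f z)) μ := by
  obtain ⟨C, hC⟩ := hK.bounded
  refine (hf.norm.const_mul C).mono' (isBoundedBilinearMap_apply.continuous
    |>.comp_aestronglyMeasurable (((hK.continuous.comp (continuous_sub_left y))
      |>.aestronglyMeasurable).prodMk hf.1)) (.of_forall fun z => ?_)
  exact ((K (y - z)).le_opNorm (f z)).trans
    (mul_le_mul_of_nonneg_right (hC _) (norm_nonneg _))

theorem IsRegularKernel.integrable_apply_of_bounded (hK : IsRegularKernel K)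
    (hf : AEStronglyMeasurable f) {C : ℝ} (hC : ∀ᵐ z, ‖f z‖ ≤ C) (y : ℝ) :
    Integrable (fun z => K (y - z) (f z)) := by
  refine ((hK.integrable.comp_sub_left y).norm.mul_const C).mono'
    (isBoundedBilinearMap_apply.continuous.comp_aestronglyMeasurable
      (((hK.continuous.comp (continuous_sub_left y)).aestronglyMeasurable).prodMk hf)) ?_
  filter_upwards [hC] with z hz
  exact ((K (y - z)).le_opNorm (f z)).trans (mul_le_mul_of_nonneg_left hz (norm_nonneg _))

theorem HormanderBound.setLIntegral_enorm_sub_le {B : ℝ≥0∞} (hB : HormanderBound K B) {c r z : ℝ}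
    (hz : z ∈ Metric.closedBall c (r / 2)) :
    ∫⁻ y in (Metric.ball c r)ᶜ, ‖K (y - z) - K (y - c)‖ₑ ≤ B := by
  have hshift := (measurePreserving_sub_right volume c).setLIntegral_comp_preimage_emb
    (MeasurableEquiv.subRight c).measurableEmbedding
    (fun y => ‖K (y - (z - c)) - K y‖ₑ) {y : ℝ | 2 * |z - c| ≤ |y|}
  simp only [sub_sub_sub_cancel_right] at hshift
  refine le_trans (lintegral_mono_set fun y hy => ?_) (hshift.trans_le (hB (z - c)))
  rw [Set.mem_compl_iff, Metric.mem_ball, Real.dist_eq, not_lt] at hy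
  rw [Metric.mem_closedBall, Real.dist_eq] at hz
  exact ((le_div_iff₀' zero_lt_two).1 hz).trans hy

theorem IsRegularKernel.kernelConv_add (hK : IsRegularKernel K) {g b : ℝ → E}
    (hg : AEStronglyMeasurable g) {C : ℝ} (hC : ∀ᵐ z, ‖g z‖ ≤ C) (hb : Integrable b) (y : ℝ) :
    kernelConv K (g + b) y = kernelConv K g y + kernelConv K b y := by
  simp only [kernelConv, Pi.add_apply, map_add]
  exact integral_add (hK.integrable_apply_of_bounded hg hC y)
    (hK.integrable_apply_of_integrable hb y)

theorem enorm_kernelConv_badPart_le {ι : Type*} [Countable ι] (hK : IsRegularKernel K)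
    {I : ι → Set ℝ} (hI : Pairwise (Function.onFun Disjoint I)) (hIm : ∀ i, MeasurableSet (I i))
    (hint : Integrable (badPart volume I f)) (y : ℝ) :
    ‖kernelConv K (badPart volume I f) y‖ₑ ≤
      ∑' i, ‖∫ z in I i, K (y - z) (badPart volume I f z)‖ₑ := by
  have hsupp : kernelConv K (badPart volume I f) y =
      ∫ z in ⋃ i, I i, K (y - z) (badPart volume I f z) :=
    (setIntegral_eq_integral_of_forall_compl_eq_zero fun z hz => by
      rw [badPart_of_notMem hz, map_zero]).symm
  rw [hsupp, ← (hasSum_integral_iUnion hIm hI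
    (hK.integrable_apply_of_integrable hint y).integrableOn).tsum_eq]
  exact enorm_tsum_le_tsum_enorm

section Complete

variable [CompleteSpace E] [CompleteSpace F]

theorem setIntegral_kernel_apply_eq (hK : IsRegularKernel K) {I : Set ℝ}
    (hf : IntegrableOn f I) (hmean : ∫ z in I, f z = 0) (c y : ℝ) :
    ∫ z in I, K (y - z) (f z) = ∫ z in I, (K (y - z) - K (y - c)) (f z) := by
  simp only [sub_apply]
  rw [integral_sub (hK.integrable_apply_of_integrable hf y) ((K (y - c)).integrable_comp hf),
    ContinuousLinearMap.integral_comp_comm _ hf, hmean, map_zero, sub_zero]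

theorem HormanderBound.lintegral_kernel_apply_mean_zero_le (hK : IsRegularKernel K) {B : ℝ≥0∞}
    (hB : HormanderBound K B) (hf : StronglyMeasurable f) {I : Set ℝ}
    {c r : ℝ} (hIc : I ⊆ Metric.closedBall c (r / 2)) (hfI : IntegrableOn f I)
    (hmean : ∫ z in I, f z = 0) :
    ∫⁻ y in (Metric.ball c r)ᶜ, ‖∫ z in I, K (y - z) (f z)‖ₑ ≤
      B * ∫⁻ z in I, ‖f z‖ₑ := by
  have hKc := hK.continuous
  have hmeas : Measurable fun p : ℝ × ℝ => ‖K (p.1 - p.2) - K (p.1 - c)‖ₑ * ‖f p.2‖ₑ :=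
    Measurable.mul (Continuous.enorm (by fun_prop)).measurable (hf.enorm.comp measurable_snd)
  set S := (Metric.ball c r)ᶜ
  calc ∫⁻ y in S, ‖∫ z in I, K (y - z) (f z)‖ₑ
      ≤ ∫⁻ y in S, ∫⁻ z in I, ‖K (y - z) - K (y - c)‖ₑ * ‖f z‖ₑ := by
        refine lintegral_mono fun y => ?_
        rw [setIntegral_kernel_apply_eq hK hfI hmean c y]
        exact (enorm_integral_le_lintegral_enorm _).trans
          (lintegral_mono fun z => ContinuousLinearMap.le_opENorm _ _)
    _ = ∫⁻ z in I, ∫⁻ y in S, ‖K (y - z) - K (y - c)‖ₑ * ‖f z‖ₑ :=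
        lintegral_lintegral_swap hmeas.aemeasurable
    _ ≤ ∫⁻ z in I, B * ‖f z‖ₑ := by
        refine setLIntegral_mono (hf.enorm.const_mul _) fun z hz => ?_
        rw [lintegral_mul_const _ (Continuous.enorm (by fun_prop)).measurable]
        exact mul_le_mul_left (hB.setLIntegral_enorm_sub_le (hIc hz)) _
    _ = B * ∫⁻ z in I, ‖f z‖ₑ := lintegral_const_mul _ hf.enorm

theorem HormanderBound.lintegral_kernelConv_badPart_le {ι : Type*} [Countable ι]
    (hK : IsRegularKernel K) {B : ℝ≥0∞} (hB : HormanderBound K B) (hf : StronglyMeasurable f)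
    {I : ι → Set ℝ} (hI : Pairwise (Function.onFun Disjoint I)) (hIm : ∀ i, MeasurableSet (I i))
    (hfin : ∀ i, volume (I i) ≠ ⊤) {c r : ι → ℝ}
    (hIc : ∀ i, I i ⊆ Metric.closedBall (c i) (r i / 2))
    (hfI : ∫⁻ x in ⋃ i, I i, ‖f x‖ₑ ≠ ⊤) :
    ∫⁻ y in (⋃ i, Metric.ball (c i) (r i))ᶜ, ‖kernelConv K (badPart volume I f) y‖ₑ ≤
      2 * B * ∫⁻ x in ⋃ i, I i, ‖f x‖ₑ := by
  set b := badPart volume I f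
  have hb : StronglyMeasurable b := stronglyMeasurable_badPart hf hI hIm
  have hbi : Integrable b := integrable_badPart hf hI hIm hfin hfI
  set S := (⋃ i, Metric.ball (c i) (r i))ᶜ
  calc ∫⁻ y in S, ‖kernelConv K b y‖ₑ
      ≤ ∫⁻ y in S, ∑' i, ‖∫ z in I i, K (y - z) (b z)‖ₑ :=
        lintegral_mono fun y => enorm_kernelConv_badPart_le hK hI hIm hbi y
    _ = ∑' i, ∫⁻ y in S, ‖∫ z in I i, K (y - z) (b z)‖ₑ :=
        lintegral_tsum fun i => (stronglyMeasurable_kernel_apply hK.continuous hb)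
          |>.integral_prod_right.enorm.aemeasurable
    _ ≤ ∑' i, B * (2 * ∫⁻ z in I i, ‖f z‖ₑ) := by
        refine ENNReal.tsum_le_tsum fun i => ?_
        have hS : S ⊆ (Metric.ball (c i) (r i))ᶜ :=
          Set.compl_subset_compl.2 (Set.subset_iUnion (fun i => Metric.ball (c i) (r i)) i)
        exact ((lintegral_mono_set hS).trans (hB.lintegral_kernel_apply_mean_zero_le hK hb
            (hIc i) hbi.integrableOn (setIntegral_badPart hI (hIm i) (hfin i)))).trans
          (mul_le_mul_right (setLIntegral_enorm_badPart_le hf hI (hfin i)) _)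
    _ = 2 * B * ∫⁻ x in ⋃ i, I i, ‖f x‖ₑ := by
        rw [ENNReal.tsum_mul_left, ENNReal.tsum_mul_left, lintegral_iUnion hIm hI]
        ring

end Complete

end Kernel

/-! ### The level sets of a singular integral -/

section StoppingSets

variable {E : Type*} [NormedAddCommGroup E] {f : ℝ → E} {t : ℝ}

/-- The set outside of which the bad part is controlled by Hörmander's condition: the union of the
concentric doubles of the stopping intervals. -/
def doubledStoppingSet (f : ℝ → E) (t : ℝ) : Set ℝ :=
  ⋃ p : stoppingIndices f t, Metric.ball ((p.1.2 + 1 / 2) * (2 : ℝ) ^ p.1.1) ((2 : ℝ) ^ p.1.1)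

theorem volume_doubledStoppingSet_le :
    volume (doubledStoppingSet f t) ≤ 2 * volume (⋃ p, stoppingIco f t p) := by
  rw [measure_iUnion pairwise_disjoint_stoppingIco measurableSet_stoppingIco,
    ← ENNReal.tsum_mul_left]
  refine (measure_iUnion_le _).trans_eq (tsum_congr fun p => ?_)
  rw [Real.volume_ball, stoppingIco, volume_dyadicIco, ENNReal.ofReal_mul zero_le_two,
    ENNReal.ofReal_ofNat]

theorem volume_iUnion_stoppingIco_ne_top (hf : StronglyMeasurable f) (ht : 0 < t)
    (hfin : ∫⁻ x in {x | t / 2 < ‖f x‖}, ‖f x‖ₑ ≠ ⊤) : volume (⋃ p, stoppingIco f t p) ≠ ⊤ :=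
  ne_top_of_le_ne_top (ENNReal.mul_ne_top ENNReal.ofReal_ne_top hfin)
    (volume_iUnion_stoppingIco_le hf ht)

theorem setLIntegral_iUnion_stoppingIco_ne_top (hf : StronglyMeasurable f) (ht : 0 < t)
    (hfin : ∫⁻ x in {x | t / 2 < ‖f x‖}, ‖f x‖ₑ ≠ ⊤) :
    ∫⁻ x in ⋃ p, stoppingIco f t p, ‖f x‖ₑ ≠ ⊤ :=
  ne_top_of_le_ne_top
    (ENNReal.mul_ne_top ENNReal.ofReal_ne_top (volume_iUnion_stoppingIco_ne_top hf ht hfin))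
    (setLIntegral_iUnion_stoppingIco_le ht.le)

end StoppingSets

section LevelSets

variable {E F : Type*} [NormedAddCommGroup E] [NormedSpace ℂ E]
  [NormedAddCommGroup F] [NormedSpace ℂ F] {K : ℝ → E →L[ℂ] F} {f : ℝ → E} {t : ℝ}

/-- The bad part of `f` with respect to its stopping intervals at height `t`. -/
noncomputable def calderonZygmundBad (f : ℝ → E) (t : ℝ) : ℝ → E :=
  badPart volume (stoppingIco f t) f

theorem stronglyMeasurable_calderonZygmundBad (hf : StronglyMeasurable f) :
    StronglyMeasurable (calderonZygmundBad f t) :=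
  stronglyMeasurable_badPart hf pairwise_disjoint_stoppingIco measurableSet_stoppingIco

theorem integrable_calderonZygmundBad (hf : StronglyMeasurable f) (ht : 0 < t)
    (hfin : ∫⁻ x in {x | t / 2 < ‖f x‖}, ‖f x‖ₑ ≠ ⊤) : Integrable (calderonZygmundBad f t) :=
  integrable_badPart hf pairwise_disjoint_stoppingIco measurableSet_stoppingIco
    volume_stoppingIco_ne_top (setLIntegral_iUnion_stoppingIco_ne_top hf ht hfin)

theorem enorm_sub_calderonZygmundBad_le (ht : 0 ≤ t) {x : ℝ} (hx : x ∈ ⋃ p, stoppingIco f t p) :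
    ‖f x - calderonZygmundBad f t x‖ₑ ≤ ENNReal.ofReal (2 * t) :=
  enorm_sub_badPart_le pairwise_disjoint_stoppingIco (setLIntegral_stoppingIco_le ht) hx

theorem sub_calderonZygmundBad_of_notMem {x : ℝ} (hx : x ∉ ⋃ p, stoppingIco f t p) :
    f x - calderonZygmundBad f t x = f x := by
  rw [calderonZygmundBad, badPart_of_notMem hx, sub_zero]

theorem ae_norm_sub_calderonZygmundBad_le (hf : StronglyMeasurable f) (ht : 0 < t)
    (hfin : ∫⁻ x in {x | t / 2 < ‖f x‖}, ‖f x‖ₑ ≠ ⊤) :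
    ∀ᵐ x, ‖(f - calderonZygmundBad f t) x‖ ≤ 2 * t := by
  filter_upwards [ae_norm_le_of_notMem_stoppingIco hf ht hfin] with x hx
  by_cases hxΩ : x ∈ ⋃ p, stoppingIco f t p
  · rw [Pi.sub_apply, ← ENNReal.ofReal_le_ofReal_iff (by positivity), ofReal_norm]
    exact enorm_sub_calderonZygmundBad_le ht.le hxΩ
  · rw [Pi.sub_apply, sub_calderonZygmundBad_of_notMem hxΩ]
    linarith [hx hxΩ]

theorem lintegral_sub_calderonZygmundBad_sq_le (hf : StronglyMeasurable f) (ht : 0 < t)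
    (hfin : ∫⁻ x in {x | t / 2 < ‖f x‖}, ‖f x‖ₑ ≠ ⊤) :
    ∫⁻ x, ‖(f - calderonZygmundBad f t) x‖ₑ ^ (2 : ℝ) ≤
      ENNReal.ofReal t ^ (2 : ℝ) * (4 * volume (⋃ p, stoppingIco f t p)) +
        ∫⁻ x in {x | ‖f x‖ ≤ t}, ‖f x‖ₑ ^ (2 : ℝ) := by
  have hΩ : MeasurableSet (⋃ p, stoppingIco f t p) := .iUnion measurableSet_stoppingIco
  rw [← lintegral_add_compl _ hΩ]
  gcongr ?_ + ?_
  · calc ∫⁻ x in ⋃ p, stoppingIco f t p, ‖(f - calderonZygmundBad f t) x‖ₑ ^ (2 : ℝ)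
        ≤ ∫⁻ _ in ⋃ p, stoppingIco f t p, ENNReal.ofReal (2 * t) ^ (2 : ℝ) :=
          setLIntegral_mono measurable_const fun x hx =>
            ENNReal.rpow_le_rpow (enorm_sub_calderonZygmundBad_le ht.le hx) zero_le_two
      _ = _ := by
          rw [setLIntegral_const, ENNReal.ofReal_mul zero_le_two,
            ENNReal.mul_rpow_of_nonneg _ _ zero_le_two]
          norm_num
          ring
  · calc ∫⁻ x in (⋃ p, stoppingIco f t p)ᶜ, ‖(f - calderonZygmundBad f t) x‖ₑ ^ (2 : ℝ)
        = ∫⁻ x in (⋃ p, stoppingIco f t p)ᶜ, ‖f x‖ₑ ^ (2 : ℝ) :=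
          setLIntegral_congr_fun hΩ.compl fun x hx => by
            rw [Pi.sub_apply, sub_calderonZygmundBad_of_notMem hx]
      _ ≤ _ := lintegral_mono_set' (ae_norm_le_of_notMem_stoppingIco hf ht hfin)

variable {A B : ℝ≥0∞}

theorem StrongTypeBound.volume_good_ge_le (hK : Continuous K) (hA : StrongTypeBound K 2 A)
    (hf : StronglyMeasurable f) (ht : 0 < t)
    (hfin : ∫⁻ x in {x | t / 2 < ‖f x‖}, ‖f x‖ₑ ≠ ⊤) :
    volume {y | t ≤ ‖kernelConv K (f - calderonZygmundBad f t) y‖} ≤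
      A * (4 * volume (⋃ p, stoppingIco f t p) +
        ENNReal.ofReal (t ^ (-2 : ℝ)) * ∫⁻ x in {x | ‖f x‖ ≤ t}, ‖f x‖ₑ ^ (2 : ℝ)) := by
  set g := f - calderonZygmundBad f t
  have hg : StronglyMeasurable g := hf.sub (stronglyMeasurable_calderonZygmundBad hf)
  have hmarkov := mul_meas_ge_le_lintegral₀ (μ := volume)
    ((stronglyMeasurable_kernelConv hK hg).enorm.pow_const (2 : ℝ)).aemeasurable
    (ENNReal.ofReal t ^ (2 : ℝ))
  simp only [ENNReal.rpow_le_rpow_iff zero_lt_two, ← ofReal_norm,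
    ENNReal.ofReal_le_ofReal_iff (norm_nonneg _)] at hmarkov
  simp only [ofReal_norm] at hmarkov
  have hinv : ENNReal.ofReal t ^ (2 : ℝ) * ENNReal.ofReal (t ^ (-2 : ℝ)) = 1 := by
    rw [ENNReal.ofReal_rpow_of_pos ht, ← ENNReal.ofReal_mul (by positivity), ← Real.rpow_add ht]
    norm_num
  refine (ENNReal.mul_le_mul_iff_right (left_ne_zero_of_mul_eq_one hinv)
    (ENNReal.rpow_ne_top_of_nonneg zero_le_two ENNReal.ofReal_ne_top)).1
    ((hmarkov.trans ((hA g hg).trans (mul_le_mul_right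
      (lintegral_sub_calderonZygmundBad_sq_le hf ht hfin) _))).trans_eq ?_)
  rw [show ∀ T V W G : ℝ≥0∞, T * (A * (V + W * G)) = A * (T * V + T * W * G) by
    intros; ring, hinv, one_mul]

theorem kernelConv_superlevel_subset (hK : IsRegularKernel K) (hf : StronglyMeasurable f)
    (ht : 0 < t) (hfin : ∫⁻ x in {x | t / 2 < ‖f x‖}, ‖f x‖ₑ ≠ ⊤) :
    {y | 2 * t < ‖kernelConv K f y‖} ⊆
      {y | t ≤ ‖kernelConv K (f - calderonZygmundBad f t) y‖} ∪ (doubledStoppingSet f t ∪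
        {y | t ≤ ‖kernelConv K (calderonZygmundBad f t) y‖} \ doubledStoppingSet f t) := by
  intro y hy
  have hsplit := hK.kernelConv_add
    (hf.sub (stronglyMeasurable_calderonZygmundBad hf)).aestronglyMeasurable
    (ae_norm_sub_calderonZygmundBad_le hf ht hfin) (integrable_calderonZygmundBad hf ht hfin) y
  rw [sub_add_cancel] at hsplit
  rw [Set.union_sdiff_self]
  by_contra! hy'
  simp only [Set.mem_union, Set.mem_ofPred_eq, not_or, not_le] at hy hy'
  rw [hsplit] at hy
  linarith [norm_add_le (kernelConv K (f - calderonZygmundBad f t) y)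
    (kernelConv K (calderonZygmundBad f t) y), hy'.1, hy'.2.2]

variable [CompleteSpace E] [CompleteSpace F]

theorem HormanderBound.volume_bad_ge_le (hK : IsRegularKernel K) (hB : HormanderBound K B)
    (hf : StronglyMeasurable f) (ht : 0 < t)
    (hfin : ∫⁻ x in {x | t / 2 < ‖f x‖}, ‖f x‖ₑ ≠ ⊤) :
    volume ({y | t ≤ ‖kernelConv K (calderonZygmundBad f t) y‖} \ doubledStoppingSet f t) ≤
      4 * B * volume (⋃ p, stoppingIco f t p) := by
  set b := calderonZygmundBad f t
  have hTb := stronglyMeasurable_kernelConv hK.continuous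
    (stronglyMeasurable_calderonZygmundBad hf : StronglyMeasurable b)
  have hmarkov := mul_meas_ge_le_lintegral₀ (μ := volume.restrict (doubledStoppingSet f t)ᶜ)
    hTb.enorm.aemeasurable (ENNReal.ofReal t)
  simp only [← ofReal_norm, ENNReal.ofReal_le_ofReal_iff (norm_nonneg _)] at hmarkov
  rw [Measure.restrict_apply (measurableSet_le measurable_const hTb.norm.measurable),
    ← Set.sdiff_eq] at hmarkov
  simp only [ofReal_norm] at hmarkov
  have hL1 := hB.lintegral_kernelConv_badPart_le hK hf pairwise_disjoint_stoppingIco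
    measurableSet_stoppingIco volume_stoppingIco_ne_top
    (fun p : stoppingIndices f t => dyadicIco_subset_closedBall p.1.1 p.1.2)
    (setLIntegral_iUnion_stoppingIco_ne_top hf ht hfin)
  refine (ENNReal.mul_le_mul_iff_right (a := ENNReal.ofReal t) (by simpa using ht)
    ENNReal.ofReal_ne_top).1 ((hmarkov.trans (hL1.trans (mul_le_mul_right
      (setLIntegral_iUnion_stoppingIco_le ht.le) _))).trans_eq ?_)
  rw [ENNReal.ofReal_mul zero_le_two, ENNReal.ofReal_ofNat]
  ring

theorem StrongTypeBound.volume_kernelConv_gt_le (hK : IsRegularKernel K)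
    (hA : StrongTypeBound K 2 A) (hB : HormanderBound K B) (hf : StronglyMeasurable f)
    (ht : 0 < t) (hfin : ∫⁻ x in {x | t / 2 < ‖f x‖}, ‖f x‖ₑ ≠ ⊤) :
    volume {y | 2 * t < ‖kernelConv K f y‖} ≤
      (4 * A + 4 * B + 2) *
        (ENNReal.ofReal (2 / t) * ∫⁻ x in {x | t / 2 < ‖f x‖}, ‖f x‖ₑ) +
      A * (ENNReal.ofReal (t ^ (-2 : ℝ)) * ∫⁻ x in {x | ‖f x‖ ≤ t}, ‖f x‖ₑ ^ (2 : ℝ)) := by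
  calc volume {y | 2 * t < ‖kernelConv K f y‖}
      ≤ volume {y | t ≤ ‖kernelConv K (f - calderonZygmundBad f t) y‖} +
          (volume (doubledStoppingSet f t) + volume
            ({y | t ≤ ‖kernelConv K (calderonZygmundBad f t) y‖} \ doubledStoppingSet f t)) :=
        (measure_mono (kernelConv_superlevel_subset hK hf ht hfin)).trans
          ((measure_union_le _ _).trans (add_le_add le_rfl (measure_union_le _ _)))
    _ ≤ A * (4 * volume (⋃ p, stoppingIco f t p) +
          ENNReal.ofReal (t ^ (-2 : ℝ)) * ∫⁻ x in {x | ‖f x‖ ≤ t}, ‖f x‖ₑ ^ (2 : ℝ)) +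
        (2 * volume (⋃ p, stoppingIco f t p) + 4 * B * volume (⋃ p, stoppingIco f t p)) :=
        add_le_add (hA.volume_good_ge_le hK.continuous hf ht hfin)
          (add_le_add volume_doubledStoppingSet_le (hB.volume_bad_ge_le hK hf ht hfin))
    _ = (4 * A + 4 * B + 2) * volume (⋃ p, stoppingIco f t p) +
        A * (ENNReal.ofReal (t ^ (-2 : ℝ)) * ∫⁻ x in {x | ‖f x‖ ≤ t}, ‖f x‖ₑ ^ (2 : ℝ)) := by
        ring
    _ ≤ _ := by
        gcongr
        exact volume_iUnion_stoppingIco_le hf ht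

end LevelSets

/-! ### Marcinkiewicz interpolation -/

section Interpolation

theorem setLIntegral_mul_setLIntegral_swap {α β : Type*} [MeasurableSpace α] [MeasurableSpace β]
    {μ : Measure α} {ν : Measure β} [SFinite μ] [SFinite ν] {R : Set (α × β)}
    (hR : MeasurableSet R) {T : Set α} {c : α → ℝ≥0∞} {w : β → ℝ≥0∞}
    (hc : Measurable c) (hw : Measurable w) :
    ∫⁻ t in T, c t * ∫⁻ x in {x | (t, x) ∈ R}, w x ∂ν ∂μ =
      ∫⁻ x, w x * ∫⁻ t in T, {t | (t, x) ∈ R}.indicator c t ∂μ ∂ν := by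
  have hleft : ∀ t, c t * ∫⁻ x in {x | (t, x) ∈ R}, w x ∂ν =
      ∫⁻ x, R.indicator (fun p => c p.1 * w p.2) (t, x) ∂ν := by
    intro t
    have hm : MeasurableSet {x | (t, x) ∈ R} := measurable_prodMk_left hR
    rw [← lintegral_indicator hm, ← lintegral_const_mul _ (hw.indicator hm)]
    refine lintegral_congr fun x => ?_
    by_cases h : (t, x) ∈ R <;> simp [Set.indicator, h]
  have hright : ∀ x, w x * ∫⁻ t in T, {t | (t, x) ∈ R}.indicator c t ∂μ =
      ∫⁻ t in T, R.indicator (fun p => c p.1 * w p.2) (t, x) ∂μ := by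
    intro x
    have hm : MeasurableSet {t | (t, x) ∈ R} := measurable_prodMk_right hR
    rw [← lintegral_const_mul _ (hc.indicator hm)]
    refine lintegral_congr fun t => ?_
    by_cases h : (t, x) ∈ R <;> simp [Set.indicator, h, mul_comm]
  simp only [hleft, hright]
  exact lintegral_lintegral_swap (Measurable.indicator (by fun_prop) hR).aemeasurable

theorem setLIntegral_Ioc_rpow {s a : ℝ} (hs : -1 < s) (ha : 0 ≤ a) :
    ∫⁻ t in Set.Ioc 0 a, ENNReal.ofReal (t ^ s) = ENNReal.ofReal (a ^ (s + 1) / (s + 1)) := by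
  rw [← ofReal_integral_eq_lintegral_ofReal]
  · rw [← intervalIntegral.integral_of_le ha, integral_rpow (Or.inl hs),
      Real.zero_rpow (by linarith), sub_zero]
  · rw [← IntegrableOn, ← intervalIntegrable_iff_integrableOn_Ioc_of_le ha]
    exact intervalIntegral.intervalIntegrable_rpow' hs
  · exact ae_restrict_of_forall_mem measurableSet_Ioc fun t ht => Real.rpow_nonneg ht.1.le _

theorem setLIntegral_Ioi_rpow {s a : ℝ} (hs : s < -1) (ha : 0 < a) :
    ∫⁻ t in Set.Ioi a, ENNReal.ofReal (t ^ s) = ENNReal.ofReal (-a ^ (s + 1) / (s + 1)) := by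
  rw [← ofReal_integral_eq_lintegral_ofReal]
  · rw [integral_Ioi_rpow_of_lt hs ha]
  · exact integrableOn_Ioi_rpow_of_lt hs ha
  · exact ae_restrict_of_forall_mem measurableSet_Ioi fun t ht =>
      Real.rpow_nonneg (ha.trans ht).le _

variable {α β E F : Type*} [MeasurableSpace α] [MeasurableSpace β] {μ : Measure α}
  {ν : Measure β} [NormedAddCommGroup E] [NormedAddCommGroup F] {f : α → E} {p r : ℝ}

theorem setLIntegral_high_part_ne_top (hf : StronglyMeasurable f) (hp : 1 ≤ p)
    (hfp : ∫⁻ x, ‖f x‖ₑ ^ p ∂μ ≠ ⊤) {t : ℝ} (ht : 0 < t) :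
    ∫⁻ x in {x | t < ‖f x‖}, ‖f x‖ₑ ∂μ ≠ ⊤ := by
  refine ne_top_of_le_ne_top (ENNReal.mul_ne_top ENNReal.ofReal_ne_top hfp :
    ENNReal.ofReal (t ^ (1 - p)) * ∫⁻ x, ‖f x‖ₑ ^ p ∂μ ≠ ⊤) ?_
  rw [← lintegral_const_mul _ (hf.enorm.pow_const p)]
  refine le_trans (setLIntegral_mono ((hf.enorm.pow_const p).const_mul _) fun x hx => ?_)
    (setLIntegral_le_lintegral _ _)
  have hx0 : 0 < ‖f x‖ := ht.trans hx
  rw [← ofReal_norm, ENNReal.ofReal_rpow_of_nonneg hx0.le (by linarith),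
    ← ENNReal.ofReal_mul (by positivity)]
  refine ENNReal.ofReal_le_ofReal ?_
  calc ‖f x‖ = ‖f x‖ ^ (1 - p) * ‖f x‖ ^ p := by
        rw [← Real.rpow_add hx0, sub_add_cancel, Real.rpow_one]
    _ ≤ t ^ (1 - p) * ‖f x‖ ^ p := by
        gcongr ?_ * _
        exact Real.rpow_le_rpow_of_nonpos ht (le_of_lt hx) (by linarith)

theorem lintegral_high_part_le [SFinite μ] (hf : StronglyMeasurable f) (hp : 1 < p) :
    ∫⁻ t in Set.Ioi (0 : ℝ), ENNReal.ofReal (t ^ (p - 2)) *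
        ∫⁻ x in {x | t / 2 < ‖f x‖}, ‖f x‖ₑ ∂μ ≤
      ENNReal.ofReal (2 ^ (p - 1) / (p - 1)) * ∫⁻ x, ‖f x‖ₑ ^ p ∂μ := by
  have hR : MeasurableSet {q : ℝ × α | q.1 / 2 < ‖f q.2‖} :=
    measurableSet_lt (by fun_prop) (hf.norm.measurable.comp measurable_snd)
  refine (setLIntegral_mul_setLIntegral_swap (μ := volume) (ν := μ) hR
    (c := fun t => ENNReal.ofReal (t ^ (p - 2))) (by fun_prop) hf.enorm).trans_le ?_
  rw [← lintegral_const_mul _ (hf.enorm.pow_const p)]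
  refine lintegral_mono fun x => ?_
  have hinner : ∫⁻ t in Set.Ioi (0 : ℝ), {t | t / 2 < ‖f x‖}.indicator
      (fun t => ENNReal.ofReal (t ^ (p - 2))) t ≤
      ENNReal.ofReal ((2 * ‖f x‖) ^ (p - 1) / (p - 1)) := by
    rw [show p - 1 = p - 2 + 1 by ring, ← setLIntegral_Ioc_rpow (by linarith) (by positivity),
      setLIntegral_indicator (measurableSet_lt (by fun_prop) measurable_const)]
    exact lintegral_mono_set fun t ht => ⟨ht.2, by linarith [show t / 2 < ‖f x‖ from ht.1]⟩
  refine (mul_le_mul_right hinner _).trans_eq ?_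
  rw [← ofReal_norm, ENNReal.ofReal_rpow_of_nonneg (norm_nonneg _) (by linarith),
    ← ENNReal.ofReal_mul (norm_nonneg _),
    ← ENNReal.ofReal_mul (div_nonneg (by positivity) (by linarith)),
    Real.mul_rpow zero_le_two (norm_nonneg _)]
  have hpow : ‖f x‖ ^ p = ‖f x‖ * ‖f x‖ ^ (p - 1) := by
    rw [← Real.rpow_one_add' (norm_nonneg _) (by linarith), add_sub_cancel]
  rw [hpow]
  ring_nf

theorem lintegral_low_part_le [SFinite μ] (hf : StronglyMeasurable f) (hp : 0 < p) (hpr : p < r) :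
    ∫⁻ t in Set.Ioi (0 : ℝ), ENNReal.ofReal (t ^ (p - 1 - r)) *
        ∫⁻ x in {x | ‖f x‖ ≤ t}, ‖f x‖ₑ ^ r ∂μ ≤
      ENNReal.ofReal (1 / (r - p)) * ∫⁻ x, ‖f x‖ₑ ^ p ∂μ := by
  have hR : MeasurableSet {q : ℝ × α | ‖f q.2‖ ≤ q.1} :=
    measurableSet_le (hf.norm.measurable.comp measurable_snd) (by fun_prop)
  refine (setLIntegral_mul_setLIntegral_swap (μ := volume) (ν := μ) hR
    (c := fun t => ENNReal.ofReal (t ^ (p - 1 - r))) (by fun_prop)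
    (hf.enorm.pow_const r)).trans_le ?_
  rw [← lintegral_const_mul _ (hf.enorm.pow_const p)]
  refine lintegral_mono fun x => ?_
  rcases (norm_nonneg (f x)).eq_or_lt' with hx | hx
  · rw [enorm_eq_zero.2 (norm_eq_zero.1 hx), ENNReal.zero_rpow_of_pos (hp.trans hpr), zero_mul]
    exact zero_le
  have hinner : ∫⁻ t in Set.Ioi (0 : ℝ), (Set.Ici ‖f x‖).indicator
      (fun t => ENNReal.ofReal (t ^ (p - 1 - r))) t ≤
      ENNReal.ofReal (‖f x‖ ^ (p - r) / (r - p)) := by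
    rw [show ‖f x‖ ^ (p - r) / (r - p) = -‖f x‖ ^ (p - 1 - r + 1) / (p - 1 - r + 1) by
        rw [neg_div, ← div_neg]; ring_nf,
      ← setLIntegral_Ioi_rpow (by linarith) hx, setLIntegral_congr (Ioi_ae_eq_Ici (a := ‖f x‖)),
      setLIntegral_indicator measurableSet_Ici]
    exact lintegral_mono_set Set.inter_subset_left
  refine (mul_le_mul_right hinner _).trans_eq ?_
  rw [← ofReal_norm, ENNReal.ofReal_rpow_of_pos hx, ENNReal.ofReal_rpow_of_pos hx,
    ← ENNReal.ofReal_mul (by positivity),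
    ← ENNReal.ofReal_mul (div_nonneg zero_le_one (sub_pos.2 hpr).le), ← mul_div_assoc,
    ← Real.rpow_add hx, add_sub_cancel, one_div_mul_eq_div]

theorem lintegral_enorm_rpow_eq_lintegral_meas_two_mul_lt {G : β → F} (hG : StronglyMeasurable G)
    (hp : 0 < p) :
    ∫⁻ y, ‖G y‖ₑ ^ p ∂ν = 2 ^ p * (ENNReal.ofReal p *
      ∫⁻ t in Set.Ioi (0 : ℝ), ν {y | 2 * t < ‖G y‖} * ENNReal.ofReal (t ^ (p - 1))) := by
  have hlayer := lintegral_rpow_eq_lintegral_meas_lt_mul (μ := ν) (f := fun y => ‖G y‖ / 2)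
    (.of_forall fun y => by positivity) (hG.norm.measurable.div_const 2).aemeasurable hp
  simp only [lt_div_iff₀' (zero_lt_two' ℝ)] at hlayer
  rw [← hlayer, ← lintegral_const_mul _
    ((hG.norm.measurable.div_const 2).pow_const p).ennreal_ofReal]
  refine lintegral_congr fun y => ?_
  rw [← ENNReal.ofReal_rpow_of_nonneg (by positivity) hp.le, ← ENNReal.mul_rpow_of_nonneg _ _ hp.le,
    ← ENNReal.ofReal_ofNat 2, ← ENNReal.ofReal_mul zero_le_two, mul_div_cancel₀ _ two_ne_zero,
    ofReal_norm]

theorem lintegral_meas_mul_rpow_le [SFinite μ] (hf : StronglyMeasurable f) (hp : 1 < p)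
    (hpr : p < r) {m : ℝ → ℝ≥0∞} {A₁ A₂ : ℝ≥0∞}
    (hm : ∀ t > 0, m t ≤
      A₁ * (ENNReal.ofReal (2 / t) * ∫⁻ x in {x | t / 2 < ‖f x‖}, ‖f x‖ₑ ∂μ) +
      A₂ * (ENNReal.ofReal (t ^ (-r)) * ∫⁻ x in {x | ‖f x‖ ≤ t}, ‖f x‖ₑ ^ r ∂μ)) :
    ∫⁻ t in Set.Ioi (0 : ℝ), m t * ENNReal.ofReal (t ^ (p - 1)) ≤
      (A₁ * (2 * ENNReal.ofReal (2 ^ (p - 1) / (p - 1))) + A₂ * ENNReal.ofReal (1 / (r - p))) *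
        ∫⁻ x, ‖f x‖ₑ ^ p ∂μ := by
  set H : ℝ → ℝ≥0∞ := fun t => ∫⁻ x in {x | t / 2 < ‖f x‖}, ‖f x‖ₑ ∂μ
  set L : ℝ → ℝ≥0∞ := fun t => ∫⁻ x in {x | ‖f x‖ ≤ t}, ‖f x‖ₑ ^ r ∂μ
  have hHm : Measurable fun t => ENNReal.ofReal (t ^ (p - 2)) * H t :=
    Measurable.mul (by fun_prop) <| Antitone.measurable fun t t' htt' =>
      lintegral_mono_set fun x (hx : t' / 2 < ‖f x‖) =>
        (div_le_div_of_nonneg_right htt' zero_le_two).trans_lt hx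
  have hLm : Measurable fun t => ENNReal.ofReal (t ^ (p - 1 - r)) * L t :=
    Measurable.mul (by fun_prop) <| Monotone.measurable fun t t' htt' =>
      lintegral_mono_set fun x (hx : ‖f x‖ ≤ t) => hx.trans htt'
  calc ∫⁻ t in Set.Ioi (0 : ℝ), m t * ENNReal.ofReal (t ^ (p - 1))
      ≤ ∫⁻ t in Set.Ioi (0 : ℝ), (A₁ * 2 * (ENNReal.ofReal (t ^ (p - 2)) * H t) +
          A₂ * (ENNReal.ofReal (t ^ (p - 1 - r)) * L t)) := by
        refine setLIntegral_mono ((hHm.const_mul _).add (hLm.const_mul _)) fun t ht => ?_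
        have ht0 : 0 < t := ht
        refine (mul_le_mul_left (hm t ht0) _).trans_eq ?_
        rw [show p - 1 - r = -r + (p - 1) by ring, Real.rpow_add ht0,
          ENNReal.ofReal_mul (by positivity), show p - 2 = -1 + (p - 1) by ring,
          Real.rpow_add ht0, ENNReal.ofReal_mul (by positivity), Real.rpow_neg_one,
          div_eq_mul_inv, ENNReal.ofReal_mul zero_le_two, ENNReal.ofReal_ofNat]
        ring
    _ = A₁ * 2 * (∫⁻ t in Set.Ioi (0 : ℝ), ENNReal.ofReal (t ^ (p - 2)) * H t) +
        A₂ * ∫⁻ t in Set.Ioi (0 : ℝ), ENNReal.ofReal (t ^ (p - 1 - r)) * L t := by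
        rw [lintegral_add_left (hHm.const_mul _), lintegral_const_mul _ hHm,
          lintegral_const_mul _ hLm]
    _ ≤ A₁ * 2 * (ENNReal.ofReal (2 ^ (p - 1) / (p - 1)) * ∫⁻ x, ‖f x‖ₑ ^ p ∂μ) +
        A₂ * (ENNReal.ofReal (1 / (r - p)) * ∫⁻ x, ‖f x‖ₑ ^ p ∂μ) := by
        gcongr
        · exact lintegral_high_part_le hf hp
        · exact lintegral_low_part_le hf (by linarith) hpr
    _ = _ := by ring

end Interpolation

section CalderonZygmund

/-- The `Lᵖ` constant, `1 < p < 2`, of a convolution operator with `L²` constant `A` and Hörmander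
constant `B`, as produced by interpolating the level set estimate. -/
noncomputable def calderonZygmundConst (p : ℝ) (A B : ℝ≥0∞) : ℝ≥0∞ :=
  2 ^ p * (ENNReal.ofReal p * ((4 * A + 4 * B + 2) * (2 * ENNReal.ofReal (2 ^ (p - 1) / (p - 1))) +
    A * ENNReal.ofReal (1 / (2 - p))))

variable {p : ℝ} {A B : ℝ≥0∞}

theorem calderonZygmundConst_ne_top (hp : 0 ≤ p) (hA : A ≠ ⊤) (hB : B ≠ ⊤) :
    calderonZygmundConst p A B ≠ ⊤ := by
  have : (2 : ℝ≥0∞) ^ p ≠ ⊤ := ENNReal.rpow_ne_top_of_nonneg hp ENNReal.ofNat_ne_top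
  unfold calderonZygmundConst
  finiteness

theorem calderonZygmundConst_ne_zero (hp : 1 < p) : calderonZygmundConst p A B ≠ 0 := by
  have hfac : ENNReal.ofReal p ≠ 0 := (ENNReal.ofReal_pos.2 (by linarith)).ne'
  have hhigh : ENNReal.ofReal (2 ^ (p - 1) / (p - 1)) ≠ 0 :=
    (ENNReal.ofReal_pos.2 (div_pos (by positivity) (sub_pos.2 hp))).ne'
  simp [calderonZygmundConst, hfac, hhigh]

theorem StrongTypeBound.of_hormander_of_lt_two {E F : Type*} [NormedAddCommGroup E]
    [NormedSpace ℂ E] [CompleteSpace E] [NormedAddCommGroup F] [NormedSpace ℂ F] [CompleteSpace F]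
    {K : ℝ → E →L[ℂ] F} (hK : IsRegularKernel K) (hA : StrongTypeBound K 2 A)
    (hB : HormanderBound K B) (hp : 1 < p) (hp2 : p < 2) :
    StrongTypeBound K p (calderonZygmundConst p A B) := by
  intro f hf
  by_cases hfp : ∫⁻ y, ‖f y‖ₑ ^ p = ⊤
  · rw [hfp, ENNReal.mul_top (calderonZygmundConst_ne_zero hp)]
    exact le_top
  rw [lintegral_enorm_rpow_eq_lintegral_meas_two_mul_lt
    (stronglyMeasurable_kernelConv hK.continuous hf) (by linarith), calderonZygmundConst,
    mul_assoc, mul_assoc]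
  gcongr
  exact lintegral_meas_mul_rpow_le hf hp hp2 fun t ht => hA.volume_kernelConv_gt_le hK hB hf ht
    (setLIntegral_high_part_ne_top hf hp.le hfp (half_pos ht))

end CalderonZygmund

/-! ### Sums over dyadic scales -/

section DyadicSum

theorem min_two_zpow_mul_le {r : ℝ} {n : ℤ} (hr : r ∈ Set.Ico ((2 : ℝ) ^ n) ((2 : ℝ) ^ (n + 1)))
    (k : ℤ) :
    min ((2 : ℝ) ^ k * r) ((2 : ℝ) ^ k * r)⁻¹ ≤ 2 * (2 : ℝ) ^ (-|k + n|) := by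
  rcases le_total 0 (k + n) with h | h
  · calc min ((2 : ℝ) ^ k * r) ((2 : ℝ) ^ k * r)⁻¹ ≤ ((2 : ℝ) ^ k * r)⁻¹ := min_le_right _ _
      _ ≤ ((2 : ℝ) ^ k * (2 : ℝ) ^ n)⁻¹ := by gcongr; exact hr.1
      _ ≤ 2 * ((2 : ℝ) ^ k * (2 : ℝ) ^ n)⁻¹ := le_mul_of_one_le_left (by positivity) one_le_two
      _ = 2 * (2 : ℝ) ^ (-|k + n|) := by rw [abs_of_nonneg h, zpow_neg, zpow_add₀ two_ne_zero]
  · calc min ((2 : ℝ) ^ k * r) ((2 : ℝ) ^ k * r)⁻¹ ≤ (2 : ℝ) ^ k * r := min_le_left _ _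
      _ ≤ (2 : ℝ) ^ k * (2 : ℝ) ^ (n + 1) := by gcongr; exact hr.2.le
      _ = 2 * (2 : ℝ) ^ (-|k + n|) := by
        rw [abs_of_nonpos h, neg_neg, zpow_add₀ two_ne_zero k n, zpow_add_one₀ two_ne_zero]
        ring

/-- The constant bounding `∑ₖ min (2ᵏ r) (2ᵏ r)⁻¹` uniformly in `r`. -/
noncomputable def dyadicSumConst : ℝ≥0∞ := ∑' k : ℤ, ENNReal.ofReal (2 * (2 : ℝ) ^ (-|k|))

theorem dyadicSumConst_ne_top : dyadicSumConst ≠ ⊤ := by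
  have hsum : Summable fun k : ℤ => (2 : ℝ) ^ (-|k|) :=
    .of_nat_of_neg (by simpa [zpow_neg] using summable_geometric_two)
      (by simpa [zpow_neg] using summable_geometric_two)
  exact (hsum.mul_left 2).tsum_ofReal_ne_top

theorem tsum_min_two_zpow_mul_le {r : ℝ} (hr : 0 ≤ r) :
    ∑' k : ℤ, ENNReal.ofReal (min ((2 : ℝ) ^ k * r) ((2 : ℝ) ^ k * r)⁻¹) ≤ dyadicSumConst := by
  rcases hr.eq_or_lt' with rfl | hr
  · simp only [mul_zero, inv_zero, min_self, ENNReal.ofReal_zero, tsum_zero, zero_le]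
  obtain ⟨n, hn⟩ := exists_mem_Ico_zpow hr (one_lt_two : (1 : ℝ) < 2)
  rw [dyadicSumConst, ← (Equiv.addRight n).tsum_eq fun k : ℤ =>
    ENNReal.ofReal (2 * (2 : ℝ) ^ (-|k|))]
  exact ENNReal.tsum_le_tsum fun k => ENNReal.ofReal_le_ofReal (min_two_zpow_mul_le hn k)

end DyadicSum

/-! ### Dyadic dilates of a Schwartz function -/

theorem setLIntegral_comp_mul_left {h : ℝ → ℝ≥0∞} (hh : Measurable h) {a : ℝ} (ha : a ≠ 0)
    {S : Set ℝ} (hS : MeasurableSet S) :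
    ENNReal.ofReal |a| * ∫⁻ y in (a * ·) ⁻¹' S, h (a * y) = ∫⁻ y in S, h y := by
  conv_rhs => rw [← Real.smul_map_volume_mul_left ha, Measure.restrict_smul,
    lintegral_smul_measure, setLIntegral_map hS hh (measurable_const_mul a)]
  rfl

section Translation

variable {E : Type*} [NormedAddCommGroup E]

theorem lintegral_enorm_sub_translate_le [NormedSpace ℝ E] [CompleteSpace E] {f : ℝ → E}
    (hf : ContDiff ℝ 1 f) (s : ℝ) :
    ∫⁻ y, ‖f (y - s) - f y‖ₑ ≤ ENNReal.ofReal |s| * ∫⁻ y, ‖deriv f y‖ₑ := by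
  have : Continuous (deriv f) := hf.continuous_deriv le_rfl
  have hder (y τ : ℝ) : HasDerivAt (fun τ => f (y - τ * s)) (-s • deriv f (y - τ * s)) τ := by
    have hlin : HasDerivAt (fun τ : ℝ => y - τ * s) (-s) τ := by
      simpa using ((hasDerivAt_id τ).mul_const s).const_sub y
    exact (hf.differentiable one_ne_zero _).hasDerivAt.scomp τ hlin
  have hbound (y : ℝ) : ‖f (y - s) - f y‖ₑ ≤
      ∫⁻ τ in Set.Ioc (0 : ℝ) 1, ENNReal.ofReal |s| * ‖deriv f (y - τ * s)‖ₑ := by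
    have hftc := intervalIntegral.integral_eq_sub_of_hasDerivAt (a := 0) (b := 1)
      (fun τ _ => hder y τ) (Continuous.intervalIntegrable (by fun_prop) _ _)
    simp only [one_mul, zero_mul, sub_zero] at hftc
    rw [← hftc, intervalIntegral.integral_of_le zero_le_one]
    refine (enorm_integral_le_lintegral_enorm _).trans_eq (lintegral_congr fun τ => ?_)
    rw [enorm_smul, enorm_neg, Real.enorm_eq_ofReal_abs]
  have htranslate (τ : ℝ) : ∫⁻ y, ENNReal.ofReal |s| * ‖deriv f (y - τ * s)‖ₑ =
      ENNReal.ofReal |s| * ∫⁻ y, ‖deriv f y‖ₑ := by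
    rw [lintegral_const_mul _ (Continuous.measurable (by fun_prop)),
      lintegral_sub_right_eq_self (fun y => ‖deriv f y‖ₑ)]
  calc ∫⁻ y, ‖f (y - s) - f y‖ₑ
      ≤ ∫⁻ y, ∫⁻ τ in Set.Ioc (0 : ℝ) 1, ENNReal.ofReal |s| * ‖deriv f (y - τ * s)‖ₑ :=
        lintegral_mono hbound
    _ = ∫⁻ τ in Set.Ioc (0 : ℝ) 1, ∫⁻ y, ENNReal.ofReal |s| * ‖deriv f (y - τ * s)‖ₑ :=
        lintegral_lintegral_swap ((Continuous.measurable (by fun_prop : Continuous fun p : ℝ × ℝ =>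
          ‖deriv f (p.1 - p.2 * s)‖ₑ)).const_mul _).aemeasurable
    _ = ENNReal.ofReal |s| * ∫⁻ y, ‖deriv f y‖ₑ := by simp [htranslate]

theorem mul_setLIntegral_enorm_sub_translate_le {f : ℝ → E} (hf : StronglyMeasurable f) (s : ℝ) :
    ENNReal.ofReal |s| * ∫⁻ y in {y : ℝ | 2 * |s| ≤ |y|}, ‖f (y - s) - f y‖ₑ ≤
      2 * ∫⁻ y, ENNReal.ofReal |y| * ‖f y‖ₑ := by
  have hm : Measurable fun y : ℝ => ENNReal.ofReal |y| * ‖f y‖ₑ :=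
    Measurable.mul (by fun_prop) hf.enorm
  have hfar {y : ℝ} (hy : 2 * |s| ≤ |y|) : ENNReal.ofReal |s| * ‖f (y - s) - f y‖ₑ ≤
      ENNReal.ofReal |y - s| * ‖f (y - s)‖ₑ + ENNReal.ofReal |y| * ‖f y‖ₑ := by
    have hys : |s| ≤ |y - s| := by linarith [abs_sub_abs_le_abs_sub y s]
    have hy' : |s| ≤ |y| := by linarith [abs_nonneg s]
    grw [enorm_sub_le, mul_add]
    gcongr
  rw [← lintegral_const_mul' _ _ ENNReal.ofReal_ne_top]
  calc ∫⁻ y in {y : ℝ | 2 * |s| ≤ |y|}, ENNReal.ofReal |s| * ‖f (y - s) - f y‖ₑ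
      ≤ ∫⁻ y in {y : ℝ | 2 * |s| ≤ |y|}, (ENNReal.ofReal |y - s| * ‖f (y - s)‖ₑ +
          ENNReal.ofReal |y| * ‖f y‖ₑ) :=
        setLIntegral_mono ((hm.comp (measurable_sub_const s)).add hm) fun y hy => hfar hy
    _ ≤ ∫⁻ y, (ENNReal.ofReal |y - s| * ‖f (y - s)‖ₑ + ENNReal.ofReal |y| * ‖f y‖ₑ) :=
        setLIntegral_le_lintegral _ _
    _ = 2 * ∫⁻ y, ENNReal.ofReal |y| * ‖f y‖ₑ := by
        rw [two_mul, lintegral_add_right _ hm,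
          lintegral_sub_right_eq_self (fun y : ℝ => ENNReal.ofReal |y| * ‖f y‖ₑ)]

end Translation

/-- The constant in the single-scale Hörmander estimate for the Schwartz function `Φ`. -/
noncomputable def translationConst (Φ : 𝓢(ℝ, ℂ)) : ℝ≥0∞ :=
  (∫⁻ y, ‖deriv Φ y‖ₑ) + 2 * ∫⁻ y, ENNReal.ofReal |y| * ‖Φ y‖ₑ

theorem translationConst_ne_top (Φ : 𝓢(ℝ, ℂ)) : translationConst Φ ≠ ⊤ := by
  have hderiv : ∫⁻ y, ‖deriv Φ y‖ₑ ≠ ⊤ := (SchwartzMap.derivCLM ℂ ℂ Φ).integrable.2.ne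
  have hmoment : ∫⁻ y : ℝ, ENNReal.ofReal |y| * ‖Φ y‖ₑ ≠ ⊤ := by
    refine ne_of_eq_of_ne (lintegral_congr fun y => ?_) (Φ.integrable_pow_mul volume 1).2.ne
    beta_reduce
    rw [pow_one, enorm_mul, enorm_norm, enorm_norm, Real.enorm_eq_ofReal_abs]
  unfold translationConst
  finiteness

theorem setLIntegral_enorm_sub_translate_le_min (Φ : 𝓢(ℝ, ℂ)) (s : ℝ) :
    ∫⁻ y in {y : ℝ | 2 * |s| ≤ |y|}, ‖Φ (y - s) - Φ y‖ₑ ≤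
      translationConst Φ * ENNReal.ofReal (min |s| |s|⁻¹) := by
  rcases eq_or_ne s 0 with rfl | hs
  · simp
  have hs' : 0 < |s| := abs_pos.2 hs
  rw [mul_comm (translationConst Φ)]
  rcases min_choice |s| |s|⁻¹ with h | h <;> rw [h]
  · exact (setLIntegral_le_lintegral _ _).trans
      ((lintegral_enorm_sub_translate_le (Φ.smooth 1) s).trans (mul_le_mul_right le_self_add _))
  · rw [ENNReal.ofReal_inv_of_pos hs', ← ENNReal.mul_le_iff_le_inv (by simpa using hs) (by simp)]
    exact (mul_setLIntegral_enorm_sub_translate_le Φ.continuous.stronglyMeasurable s).trans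
      le_add_self

/-- The `L¹`-normalised dilate `y ↦ 2ᵏ Φ(2ᵏ y)`. -/
noncomputable def dyadicDilate (Φ : 𝓢(ℝ, ℂ)) (k : ℤ) : 𝓢(ℝ, ℂ) :=
  (2 : ℝ) ^ k • SchwartzMap.compCLMOfContinuousLinearEquiv ℂ
    (ContinuousLinearEquiv.unitsEquivAut ℝ (Units.mk0 ((2 : ℝ) ^ k) (zpow_pos two_pos k).ne')) Φ

theorem dyadicDilate_apply (Φ : 𝓢(ℝ, ℂ)) (k : ℤ) (y : ℝ) :
    dyadicDilate Φ k y = (2 : ℝ) ^ k • Φ ((2 : ℝ) ^ k * y) := by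
  simp [dyadicDilate, mul_comm]

theorem fourier_dyadicDilate (Φ : 𝓢(ℝ, ℂ)) (k : ℤ) (ξ : ℝ) :
    𝓕 (dyadicDilate Φ k) ξ = 𝓕 Φ ((2 : ℝ) ^ (-k) * ξ) := by
  have hk : (0 : ℝ) < (2 : ℝ) ^ k := by positivity
  have hscale := Measure.integral_comp_mul_left
    (fun y : ℝ => Real.fourierChar (-(y * ((2 : ℝ) ^ (-k) * ξ))) • Φ y) ((2 : ℝ) ^ k)
  rw [abs_of_pos (inv_pos.2 hk), eq_comm, inv_smul_eq_iff₀ hk.ne'] at hscale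
  rw [SchwartzMap.fourier_coe, SchwartzMap.fourier_coe, Real.fourier_real_eq,
    Real.fourier_real_eq, hscale, ← integral_smul]
  refine integral_congr_ae (.of_forall fun y => ?_)
  beta_reduce
  rw [dyadicDilate_apply, smul_comm]
  congr 4
  rw [zpow_neg]
  field_simp

theorem setLIntegral_dyadicDilate_sub_le (Φ : 𝓢(ℝ, ℂ)) (k : ℤ) (s : ℝ) :
    ∫⁻ y in {y : ℝ | 2 * |s| ≤ |y|}, ‖dyadicDilate Φ k (y - s) - dyadicDilate Φ k y‖ₑ ≤
      translationConst Φ *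
        ENNReal.ofReal (min ((2 : ℝ) ^ k * |s|) ((2 : ℝ) ^ k * |s|)⁻¹) := by
  have hk : (0 : ℝ) < (2 : ℝ) ^ k := by positivity
  have hset : {y : ℝ | 2 * |s| ≤ |y|} =
      ((2 : ℝ) ^ k * ·) ⁻¹' {y | 2 * |(2 : ℝ) ^ k * s| ≤ |y|} := by
    ext y
    simp only [Set.mem_preimage, Set.mem_ofPred_eq, abs_mul, abs_of_pos hk, mul_left_comm (2 : ℝ),
      mul_le_mul_iff_right₀ hk]
  have hdilate (y : ℝ) : ‖dyadicDilate Φ k (y - s) - dyadicDilate Φ k y‖ₑ =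
      ENNReal.ofReal |(2 : ℝ) ^ k| * ‖Φ ((2 : ℝ) ^ k * y - (2 : ℝ) ^ k * s) -
        Φ ((2 : ℝ) ^ k * y)‖ₑ := by
    rw [dyadicDilate_apply, dyadicDilate_apply, ← smul_sub, enorm_smul, mul_sub,
      Real.enorm_eq_ofReal_abs]
  simp_rw [hdilate]
  rw [lintegral_const_mul' _ _ ENNReal.ofReal_ne_top, hset, setLIntegral_comp_mul_left
    (h := fun y => ‖Φ (y - (2 : ℝ) ^ k * s) - Φ y‖ₑ) (Continuous.measurable (by fun_prop)) hk.ne'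
    (measurableSet_le measurable_const (by fun_prop))]
  simpa only [abs_mul, abs_of_pos hk] using
    setLIntegral_enorm_sub_translate_le_min Φ ((2 : ℝ) ^ k * s)

section DyadicKernel

variable {E F : Type*} [NormedAddCommGroup E] [NormedSpace ℂ E]
  [NormedAddCommGroup F] [NormedSpace ℂ F] {S : Finset ℤ}

/-- The operator-valued kernel `∑ₖ 2ᵏ Φ(2ᵏ y) Lₖ`, where `k` runs over the finite set `S`. -/
noncomputable def dyadicKernel (Φ : 𝓢(ℝ, ℂ)) (L : S → E →L[ℂ] F) (y : ℝ) : E →L[ℂ] F :=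
  ∑ k : S, dyadicDilate Φ k y • L k

theorem isRegularKernel_dyadicKernel (Φ : 𝓢(ℝ, ℂ)) (L : S → E →L[ℂ] F) :
    IsRegularKernel (dyadicKernel Φ L) where
  continuous := continuous_finsetSum _
    fun k _ => (dyadicDilate Φ k).continuous.smul continuous_const
  integrable := integrable_finsetSum (ε' := E →L[ℂ] F) _ fun k _ =>
    (dyadicDilate Φ k).integrable.smul_const (L k)
  bounded := by
    choose C hC using fun k : S => (dyadicDilate Φ k).decay 0 0
    refine ⟨∑ k, C k * ‖L k‖, fun y => norm_sum_le_of_le _ fun k _ => ?_⟩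
    rw [norm_smul]
    gcongr
    simpa using (hC k).2 y

theorem hormanderBound_dyadicKernel (Φ : 𝓢(ℝ, ℂ)) {L : S → E →L[ℂ] F} (hL : ∀ k, ‖L k‖ ≤ 1) :
    HormanderBound (dyadicKernel Φ L) (translationConst Φ * dyadicSumConst) := by
  intro s
  have hpt (y : ℝ) : ‖dyadicKernel Φ L (y - s) - dyadicKernel Φ L y‖ₑ ≤
      ∑ k : S, ‖dyadicDilate Φ k (y - s) - dyadicDilate Φ k y‖ₑ := by
    rw [dyadicKernel, dyadicKernel, ← Finset.sum_sub_distrib]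
    refine (enorm_sum_le (ε := E →L[ℂ] F) _ _).trans (Finset.sum_le_sum fun k _ => ?_)
    rw [← sub_smul, enorm_smul]
    refine mul_le_of_le_one_right' ?_
    simpa only [ofReal_norm] using ENNReal.ofReal_le_one.2 (hL k)
  calc ∫⁻ y in {y : ℝ | 2 * |s| ≤ |y|}, ‖dyadicKernel Φ L (y - s) - dyadicKernel Φ L y‖ₑ
      ≤ ∫⁻ y in {y : ℝ | 2 * |s| ≤ |y|},
          ∑ k : S, ‖dyadicDilate Φ k (y - s) - dyadicDilate Φ k y‖ₑ := lintegral_mono hpt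
    _ = ∑ k : S, ∫⁻ y in {y : ℝ | 2 * |s| ≤ |y|},
          ‖dyadicDilate Φ k (y - s) - dyadicDilate Φ k y‖ₑ :=
        lintegral_finsetSum _ fun k _ => Continuous.measurable (by fun_prop)
    _ ≤ ∑ k : S, translationConst Φ *
          ENNReal.ofReal (min ((2 : ℝ) ^ (k : ℤ) * |s|) ((2 : ℝ) ^ (k : ℤ) * |s|)⁻¹) :=
        Finset.sum_le_sum fun k _ => setLIntegral_dyadicDilate_sub_le Φ k s
    _ ≤ translationConst Φ * dyadicSumConst := by
        rw [← Finset.mul_sum, Finset.sum_coe_sort S fun k : ℤ =>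
          ENNReal.ofReal (min ((2 : ℝ) ^ k * |s|) ((2 : ℝ) ^ k * |s|)⁻¹)]
        gcongr
        exact (ENNReal.sum_le_tsum _).trans (tsum_min_two_zpow_mul_le (abs_nonneg s))

end DyadicKernel

/-! ### Reduction of convolution bounds to Schwartz functions -/

section SchwartzDensity

variable {α E F : Type*} [MeasurableSpace α] {μ : Measure α} [NormedAddCommGroup E]
  [NormedAddCommGroup F]

theorem eLpNorm_ofReal_eq_lintegral {p : ℝ} (hp : 0 < p) (u : α → E) :
    eLpNorm u (ENNReal.ofReal p) μ = (∫⁻ y, ‖u y‖ₑ ^ p ∂μ) ^ (1 / p) := by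
  rw [eLpNorm_eq_lintegral_rpow_enorm_toReal (ENNReal.ofReal_pos.2 hp).ne' ENNReal.ofReal_ne_top,
    ENNReal.toReal_ofReal hp.le]

theorem memLp_ofReal_iff {p : ℝ} (hp : 0 < p) {u : α → E} (hu : AEStronglyMeasurable u μ) :
    MemLp u (ENNReal.ofReal p) μ ↔ ∫⁻ y, ‖u y‖ₑ ^ p ∂μ ≠ ⊤ := by
  rw [MemLp, eLpNorm_ofReal_eq_lintegral hp, ENNReal.rpow_lt_top_iff_of_pos (by positivity),
    lt_top_iff_ne_top]
  exact and_iff_right hu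

theorem lintegral_rpow_le_mul_iff_eLpNorm_le {p : ℝ} (hp : 0 < p) {A : ℝ≥0∞} {u : α → E}
    {v : α → F} : ∫⁻ y, ‖u y‖ₑ ^ p ∂μ ≤ A * ∫⁻ y, ‖v y‖ₑ ^ p ∂μ ↔
      eLpNorm u (ENNReal.ofReal p) μ ≤ A ^ (1 / p) * eLpNorm v (ENNReal.ofReal p) μ := by
  rw [eLpNorm_ofReal_eq_lintegral hp, eLpNorm_ofReal_eq_lintegral hp,
    ← ENNReal.mul_rpow_of_nonneg _ _ (by positivity), ENNReal.rpow_le_rpow_iff (by positivity)]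

theorem lintegral_enorm_rpow_ne_top_of_bounded {f : α → E} (hf : Integrable f μ) {C : ℝ}
    (hC : ∀ y, ‖f y‖ ≤ C) {p : ℝ} (hp : 1 ≤ p) : ∫⁻ y, ‖f y‖ₑ ^ p ∂μ ≠ ⊤ := by
  have hpt (y : α) : ‖f y‖ₑ ^ p ≤ ENNReal.ofReal C ^ (p - 1) * ‖f y‖ₑ :=
    calc ‖f y‖ₑ ^ p = ‖f y‖ₑ ^ (p - 1) * ‖f y‖ₑ ^ (1 : ℝ) := by
          rw [← ENNReal.rpow_add_of_nonneg _ _ (by linarith) zero_le_one, sub_add_cancel]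
      _ ≤ ENNReal.ofReal C ^ (p - 1) * ‖f y‖ₑ := by
          rw [ENNReal.rpow_one]
          gcongr
          simpa only [ofReal_norm] using ENNReal.ofReal_le_ofReal (hC y)
  refine ((lintegral_mono hpt).trans_lt ?_).ne
  have hC : ENNReal.ofReal C ^ (p - 1) ≠ ⊤ :=
    ENNReal.rpow_ne_top_of_nonneg (by linarith) ENNReal.ofReal_ne_top
  rw [lintegral_const_mul' _ _ hC]
  exact ENNReal.mul_lt_top hC.lt_top hf.2

variable [NormedSpace ℂ E] [NormedSpace ℂ F] {K : ℝ → E →L[ℂ] F} {f g : ℝ → E} {p q : ℝ}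

theorem lintegral_kernel_apply_le (hK : Continuous K) (hf : StronglyMeasurable f)
    (hpq : p.HolderConjugate q) (y : ℝ) :
    ∫⁻ z, ‖K (y - z) (f z)‖ₑ ≤
      (∫⁻ z, ‖K z‖ₑ ^ q) ^ (1 / q) * (∫⁻ z, ‖f z‖ₑ ^ p) ^ (1 / p) := by
  have h := ENNReal.lintegral_mul_le_Lp_mul_Lq volume hpq.symm (f := fun z => ‖K (y - z)‖ₑ)
    (g := fun z => ‖f z‖ₑ) (Continuous.measurable (by fun_prop)).aemeasurable hf.enorm.aemeasurable
  rw [lintegral_sub_left_eq_self (fun z => ‖K z‖ₑ ^ q)] at h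
  exact (lintegral_mono fun z => (K (y - z)).le_opENorm (f z)).trans h

theorem IsRegularKernel.rpow_lintegral_ne_top (hK : IsRegularKernel K) (hp : 1 ≤ p) :
    (∫⁻ z, ‖K z‖ₑ ^ p) ^ (1 / p) ≠ ⊤ := by
  obtain ⟨C, hC⟩ := hK.bounded
  exact ENNReal.rpow_ne_top_of_nonneg (by positivity)
    (lintegral_enorm_rpow_ne_top_of_bounded hK.integrable hC hp)

theorem IsRegularKernel.integrable_apply_of_rpow (hK : IsRegularKernel K)
    (hf : StronglyMeasurable f) (hpq : p.HolderConjugate q) (hfp : ∫⁻ z, ‖f z‖ₑ ^ p ≠ ⊤) (y : ℝ) :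
    Integrable fun z => K (y - z) (f z) := by
  refine ⟨((stronglyMeasurable_kernel_apply hK.continuous hf).comp_measurable
    (measurable_prodMk_left (x := y))).aestronglyMeasurable,
    (lintegral_kernel_apply_le hK.continuous hf hpq y).trans_lt ?_⟩
  exact ENNReal.mul_lt_top (hK.rpow_lintegral_ne_top hpq.symm.lt.le).lt_top
    (ENNReal.rpow_lt_top_of_nonneg hpq.one_div_nonneg hfp)

theorem IsRegularKernel.edist_kernelConv_le (hK : IsRegularKernel K) (hf : StronglyMeasurable f)
    (hg : StronglyMeasurable g) (hpq : p.HolderConjugate q) (hfp : ∫⁻ z, ‖f z‖ₑ ^ p ≠ ⊤)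
    (hgp : ∫⁻ z, ‖g z‖ₑ ^ p ≠ ⊤) (y : ℝ) :
    edist (kernelConv K f y) (kernelConv K g y) ≤
      (∫⁻ z, ‖K z‖ₑ ^ q) ^ (1 / q) * eLpNorm (f - g) (ENNReal.ofReal p) volume := by
  rw [edist_eq_enorm_sub, kernelConv, kernelConv,
    ← integral_sub (hK.integrable_apply_of_rpow hf hpq hfp y)
      (hK.integrable_apply_of_rpow hg hpq hgp y), eLpNorm_ofReal_eq_lintegral hpq.pos]
  refine (enorm_integral_le_lintegral_enorm _).trans ?_
  simp only [← map_sub]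
  exact lintegral_kernel_apply_le hK.continuous (hf.sub hg) hpq y

theorem exists_schwartz_tendsto_eLpNorm {f : ℝ → E} {p : ℝ≥0∞} [Fact (1 ≤ p)]
    (hf : MemLp f p) (hp : p ≠ ⊤) : ∃ w : ℕ → 𝓢(ℝ, E),
      Filter.Tendsto (fun n => eLpNorm (⇑(w n) - f) p volume) Filter.atTop (nhds 0) := by
  obtain ⟨v, hv, hvlim⟩ := mem_closure_iff_seq_limit.1
    (SchwartzMap.denseRange_toLpCLM (F := E) (μ := (volume : Measure ℝ)) hp (hf.toLp f))
  choose w hw using hv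
  refine ⟨w, ((Lp.tendsto_Lp_iff_tendsto_eLpNorm' _ _).1 hvlim).congr fun n => ?_⟩
  refine eLpNorm_congr_ae ?_
  rw [← hw n]
  exact ((w n).coeFn_toLp p volume).sub hf.coeFn_toLp

theorem IsRegularKernel.tendsto_kernelConv (hK : IsRegularKernel K) (hpq : p.HolderConjugate q)
    {w : ℕ → ℝ → E} (hw : ∀ n, StronglyMeasurable (w n)) (hf : StronglyMeasurable f)
    (hwp : ∀ n, ∫⁻ z, ‖w n z‖ₑ ^ p ≠ ⊤) (hfp : ∫⁻ z, ‖f z‖ₑ ^ p ≠ ⊤)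
    (hlim : Filter.Tendsto (fun n => eLpNorm (w n - f) (ENNReal.ofReal p) volume)
      Filter.atTop (nhds 0)) (y : ℝ) :
    Filter.Tendsto (fun n => kernelConv K (w n) y) Filter.atTop (nhds (kernelConv K f y)) := by
  have hbound := ENNReal.Tendsto.const_mul hlim (.inr (hK.rpow_lintegral_ne_top hpq.symm.lt.le))
  rw [mul_zero] at hbound
  exact tendsto_iff_edist_tendsto_0.2 (tendsto_of_tendsto_of_tendsto_of_le_of_le
    tendsto_const_nhds hbound (fun _ => zero_le)
    fun n => hK.edist_kernelConv_le (hw n) hf hpq (hwp n) hfp y)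

theorem StrongTypeBound.of_schwartz (hK : IsRegularKernel K) {A : ℝ≥0∞} (hA : A ≠ 0) (hA' : A ≠ ⊤)
    (hp : 1 < p) (h : ∀ u : 𝓢(ℝ, E), ∫⁻ y, ‖kernelConv K u y‖ₑ ^ p ≤ A * ∫⁻ y, ‖u y‖ₑ ^ p) :
    StrongTypeBound K p A := by
  intro u hu
  by_cases hfin : ∫⁻ y, ‖u y‖ₑ ^ p = ⊤
  · rw [hfin, ENNReal.mul_top hA]
    exact le_top
  have hpq := Real.HolderConjugate.conjExponent hp
  set P := ENNReal.ofReal p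
  have : Fact (1 ≤ P) := ⟨by simpa [P] using hp.le⟩
  have hu_memLp : MemLp u P := (memLp_ofReal_iff hpq.pos hu.aestronglyMeasurable).2 hfin
  obtain ⟨w, hw⟩ := exists_schwartz_tendsto_eLpNorm hu_memLp ENNReal.ofReal_ne_top
  have hwm (n : ℕ) : StronglyMeasurable (w n) := (w n).continuous.stronglyMeasurable
  have hwp (n : ℕ) : ∫⁻ z, ‖w n z‖ₑ ^ p ≠ ⊤ :=
    (memLp_ofReal_iff hpq.pos (hwm n).aestronglyMeasurable).1 ((w n).memLp P volume)
  have hlim : Filter.Tendsto (fun n => A ^ (1 / p) * (eLpNorm (⇑(w n) - u) P volume +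
      eLpNorm u P volume)) Filter.atTop (nhds (A ^ (1 / p) * eLpNorm u P volume)) := by
    simpa using ENNReal.Tendsto.const_mul (hw.add_const (eLpNorm u P volume))
      (.inr (ENNReal.rpow_ne_top_of_nonneg hpq.one_div_nonneg hA'))
  rw [lintegral_rpow_le_mul_iff_eLpNorm_le hpq.pos]
  calc eLpNorm (kernelConv K u) P volume
      ≤ Filter.liminf (fun n => eLpNorm (kernelConv K (w n)) P volume) Filter.atTop :=
        Lp.eLpNorm_lim_le_liminf_eLpNorm
          (fun n => (stronglyMeasurable_kernelConv hK.continuous (hwm n)).aestronglyMeasurable) _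
          (.of_forall (hK.tendsto_kernelConv hpq hwm hu hwp hfin hw))
    _ ≤ Filter.liminf (fun n => A ^ (1 / p) * (eLpNorm (⇑(w n) - u) P volume +
          eLpNorm u P volume)) Filter.atTop := by
        refine Filter.liminf_le_liminf (.of_forall fun n => ?_)
        refine ((lintegral_rpow_le_mul_iff_eLpNorm_le hpq.pos).1 (h (w n))).trans
          (mul_le_mul_right ?_ _)
        simpa only [sub_add_cancel] using eLpNorm_add_le
          ((hwm n).sub hu).aestronglyMeasurable hu.aestronglyMeasurable Fact.out
    _ = A ^ (1 / p) * eLpNorm u P volume := hlim.liminf_eq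

end SchwartzDensity

/-! ### The `L²` bound for Littlewood–Paley synthesis -/

section Synthesis

theorem enorm_rpow_two_eq_ofReal {E : Type*} [NormedAddCommGroup E] (x : E) :
    ‖x‖ₑ ^ (2 : ℝ) = ENNReal.ofReal (‖x‖ ^ 2) := by
  rw [ENNReal.ofReal_pow (norm_nonneg x), ofReal_norm, ENNReal.rpow_ofNat]

theorem lintegral_enorm_rpow_two_fourier (u : 𝓢(ℝ, ℂ)) :
    ∫⁻ ξ, ‖𝓕 u ξ‖ₑ ^ (2 : ℝ) = ∫⁻ y, ‖u y‖ₑ ^ (2 : ℝ) := by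
  have h (v : 𝓢(ℝ, ℂ)) : ∫⁻ y, ‖v y‖ₑ ^ (2 : ℝ) = ENNReal.ofReal (∫ y, ‖v y‖ ^ 2) := by
    simp only [enorm_rpow_two_eq_ofReal]
    exact (ofReal_integral_eq_lintegral_ofReal (μ := volume)
      ((memLp_two_iff_integrable_sq_norm v.continuous.aestronglyMeasurable).1 (v.memLp 2 volume))
      (.of_forall fun y => by positivity)).symm
  rw [h, h, SchwartzMap.integral_norm_sq_fourier]

theorem enorm_euclideanSpace_rpow_two {ι : Type*} [Fintype ι] (v : EuclideanSpace ℂ ι) :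
    ‖v‖ₑ ^ (2 : ℝ) = ∑ i, ‖v i‖ₑ ^ (2 : ℝ) := by
  simp only [enorm_rpow_two_eq_ofReal, EuclideanSpace.norm_sq_eq]
  exact ENNReal.ofReal_sum_of_nonneg fun i _ => by positivity

theorem enorm_sum_mul_rpow_two_le {ι : Type*} (s : Finset ι) (a b : ι → ℂ) :
    ‖∑ i ∈ s, a i * b i‖ₑ ^ (2 : ℝ) ≤
      (∑ i ∈ s, ‖a i‖ₑ ^ (2 : ℝ)) * ∑ i ∈ s, ‖b i‖ₑ ^ (2 : ℝ) := by
  have h := ENNReal.inner_le_Lp_mul_Lq s (‖a ·‖ₑ) (‖b ·‖ₑ) Real.HolderConjugate.two_two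
  rw [← ENNReal.mul_rpow_of_nonneg _ _ (by norm_num)] at h
  refine (ENNReal.le_rpow_inv_iff two_pos).1 ((enorm_sum_le s _).trans ?_)
  simpa only [enorm_mul, one_div] using h

variable (Φ : 𝓢(ℝ, ℂ)) (S : Finset ℤ)

/-- The kernel of the synthesis operator `(hₖ)ₖ ↦ ∑ₖ Φₖ * hₖ`, where `Φₖ y = 2ᵏ Φ(2ᵏ y)`. -/
noncomputable def synthesisKernel : ℝ → EuclideanSpace ℂ S →L[ℂ] ℂ :=
  dyadicKernel Φ fun k => EuclideanSpace.proj k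

theorem synthesisKernel_apply (y : ℝ) (v : EuclideanSpace ℂ S) :
    synthesisKernel Φ S y v = ∑ k : S, dyadicDilate Φ k y * v k := by
  simp [synthesisKernel, dyadicKernel]

theorem isRegularKernel_synthesisKernel : IsRegularKernel (synthesisKernel Φ S) :=
  isRegularKernel_dyadicKernel Φ _

theorem hormanderBound_synthesisKernel :
    HormanderBound (synthesisKernel Φ S) (translationConst Φ * dyadicSumConst) :=
  hormanderBound_dyadicKernel Φ fun k =>
    ContinuousLinearMap.opNorm_le_bound _ zero_le_one fun v => by
      simpa using PiLp.norm_apply_le v k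

variable {S} in
theorem kernelConv_synthesisKernel {h : ℝ → EuclideanSpace ℂ S} (hh : StronglyMeasurable h)
    {p q : ℝ} (hpq : p.HolderConjugate q) (hhp : ∫⁻ z, ‖h z‖ₑ ^ p ≠ ⊤) (y : ℝ) :
    kernelConv (synthesisKernel Φ S) h y = ∑ k : S, ∫ z, dyadicDilate Φ k (y - z) * h z k := by
  have hint (k : S) : Integrable fun z => dyadicDilate Φ k (y - z) * h z k := by
    simpa [dyadicKernel] using (isRegularKernel_dyadicKernel (S := {(k : ℤ)}) Φ fun _ =>
      (EuclideanSpace.proj k : EuclideanSpace ℂ S →L[ℂ] ℂ)).integrable_apply_of_rpow hh hpq hhp y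
  simp only [kernelConv, synthesisKernel_apply]
  exact integral_finsetSum _ fun k _ => hint k

/-- The `k`-th component of a vector-valued Schwartz function. -/
noncomputable def schwartzComponent {S : Finset ℤ} (h : 𝓢(ℝ, EuclideanSpace ℂ S)) (k : S) :
    𝓢(ℝ, ℂ) :=
  SchwartzMap.postcompCLM (EuclideanSpace.proj k : EuclideanSpace ℂ S →L[ℂ] ℂ) h

theorem fourier_sum_convolution_apply {ι : Type*} (s : Finset ι) (u w : ι → 𝓢(ℝ, ℂ)) (ξ : ℝ) :
    𝓕 (∑ i ∈ s, SchwartzMap.convolution (ContinuousLinearMap.mul ℂ ℂ) (u i) (w i)) ξ =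
      ∑ i ∈ s, 𝓕 (w i) ξ * 𝓕 (u i) ξ := by
  rw [← SchwartzMap.fourierTransformCLM_apply (𝕜 := ℂ), map_sum, sum_apply]
  refine Finset.sum_congr rfl fun i _ => ?_
  rw [SchwartzMap.fourierTransformCLM_apply, SchwartzMap.fourier_convolution,
    SchwartzMap.pairing_apply]
  exact mul_comm _ _

variable {S} in
theorem kernelConv_synthesisKernel_schwartz (h : 𝓢(ℝ, EuclideanSpace ℂ S)) (y : ℝ) :
    kernelConv (synthesisKernel Φ S) h y = (∑ k : S, SchwartzMap.convolution
      (ContinuousLinearMap.mul ℂ ℂ) (schwartzComponent h k) (dyadicDilate Φ k)) y := by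
  have hfin : ∫⁻ z, ‖h z‖ₑ ^ (2 : ℝ) ≠ ⊤ :=
    (memLp_ofReal_iff two_pos h.continuous.aestronglyMeasurable).1 (h.memLp _ volume)
  rw [kernelConv_synthesisKernel Φ h.continuous.stronglyMeasurable
    Real.HolderConjugate.two_two hfin, sum_apply]
  refine Finset.sum_congr rfl fun k _ => ?_
  rw [SchwartzMap.convolution_apply, convolution_def]
  refine integral_congr_ae (.of_forall fun z => ?_)
  simp [schwartzComponent, mul_comm]

variable {Φ} in
theorem sum_enorm_fourier_dyadicDilate_rpow_two_le {A : ℝ≥0∞}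
    (hΦ : ∀ ξ, ‖𝓕 Φ ξ‖ₑ ^ (2 : ℝ) ≤ A * ENNReal.ofReal (min |ξ| |ξ|⁻¹)) (ξ : ℝ) :
    ∑ k : S, ‖𝓕 (dyadicDilate Φ k) ξ‖ₑ ^ (2 : ℝ) ≤ A * dyadicSumConst := by
  have hk (k : ℤ) : ‖𝓕 (dyadicDilate Φ k) ξ‖ₑ ^ (2 : ℝ) ≤
      A * ENNReal.ofReal (min ((2 : ℝ) ^ (-k) * |ξ|) ((2 : ℝ) ^ (-k) * |ξ|)⁻¹) := by
    rw [fourier_dyadicDilate]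
    simpa only [abs_mul, abs_of_pos (zpow_pos (two_pos (α := ℝ)) _)] using
      hΦ ((2 : ℝ) ^ (-k) * ξ)
  rw [Finset.sum_coe_sort S fun k : ℤ => ‖𝓕 (dyadicDilate Φ k) ξ‖ₑ ^ (2 : ℝ)]
  refine (Finset.sum_le_sum fun k _ => hk k).trans ((ENNReal.sum_le_tsum S).trans ?_)
  rw [ENNReal.tsum_mul_left]
  gcongr
  exact ((Equiv.neg ℤ).tsum_eq fun k : ℤ => ENNReal.ofReal (min ((2 : ℝ) ^ k * |ξ|)
    ((2 : ℝ) ^ k * |ξ|)⁻¹)).trans_le (tsum_min_two_zpow_mul_le (abs_nonneg ξ))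

variable {Φ} in
theorem strongTypeBound_two_synthesisKernel {A : ℝ≥0∞} (hA : A ≠ ⊤)
    (hΦ : ∀ ξ, ‖𝓕 Φ ξ‖ₑ ^ (2 : ℝ) ≤ A * ENNReal.ofReal (min |ξ| |ξ|⁻¹)) :
    StrongTypeBound (synthesisKernel Φ S) 2 (A * dyadicSumConst + 1) := by
  have hconst : A * dyadicSumConst + 1 ≠ ⊤ := by
    have := dyadicSumConst_ne_top
    finiteness
  refine .of_schwartz (isRegularKernel_synthesisKernel Φ S) (by simp) hconst one_lt_two fun h => ?_
  have hmeas (u : 𝓢(ℝ, ℂ)) : Measurable fun y => ‖u y‖ₑ ^ (2 : ℝ) :=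
    u.continuous.enorm.measurable.pow_const _
  set v := ∑ k : S, SchwartzMap.convolution
    (ContinuousLinearMap.mul ℂ ℂ) (schwartzComponent h k) (dyadicDilate Φ k) with hv
  calc ∫⁻ y, ‖kernelConv (synthesisKernel Φ S) h y‖ₑ ^ (2 : ℝ)
      = ∫⁻ ξ, ‖𝓕 v ξ‖ₑ ^ (2 : ℝ) := by
        simp only [kernelConv_synthesisKernel_schwartz, ← hv, lintegral_enorm_rpow_two_fourier]
    _ ≤ ∫⁻ ξ, (A * dyadicSumConst + 1) *
          ∑ k : S, ‖𝓕 (schwartzComponent h k) ξ‖ₑ ^ (2 : ℝ) := by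
        refine lintegral_mono fun ξ => ?_
        rw [hv, fourier_sum_convolution_apply]
        refine (enorm_sum_mul_rpow_two_le _ _ _).trans (mul_le_mul_left ?_ _)
        exact (sum_enorm_fourier_dyadicDilate_rpow_two_le S hΦ ξ).trans le_self_add
    _ = (A * dyadicSumConst + 1) * ∫⁻ y, ‖h y‖ₑ ^ (2 : ℝ) := by
        rw [lintegral_const_mul' _ _ hconst, lintegral_finsetSum _ fun k _ => hmeas _]
        simp only [lintegral_enorm_rpow_two_fourier, enorm_euclideanSpace_rpow_two]
        congr 1
        exact (lintegral_finsetSum _ fun k _ => hmeas (schwartzComponent h k)).symm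

theorem exists_enorm_rpow_two_le_min {ψ : 𝓢(ℝ, ℂ)} (hψ : ψ 0 = 0) :
    ∃ A : ℝ≥0∞, A ≠ ⊤ ∧ ∀ ξ, ‖ψ ξ‖ₑ ^ (2 : ℝ) ≤ A * ENNReal.ofReal (min |ξ| |ξ|⁻¹) := by
  obtain ⟨C, hC0, hC⟩ := ψ.decay 0 0
  obtain ⟨C₁, hC₁0, hC₁⟩ := ψ.decay 1 0
  obtain ⟨C₂, -, hC₂⟩ := ψ.decay 0 1
  have hsmall (ξ : ℝ) : ‖ψ ξ‖ ≤ C₂ * |ξ| := by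
    have h := Convex.norm_image_sub_le_of_norm_deriv_le (fun x _ => ψ.differentiableAt (x := x))
      (fun x _ => by simpa [norm_deriv_eq_norm_fderiv] using hC₂ x)
      convex_univ (Set.mem_univ 0) (Set.mem_univ ξ)
    simpa [hψ] using h
  have hlarge (ξ : ℝ) : ‖ψ ξ‖ ≤ C₁ * |ξ|⁻¹ := by
    rcases eq_or_ne ξ 0 with rfl | hξ
    · simp [hψ]
    · rw [← div_eq_mul_inv, le_div_iff₀' (abs_pos.2 hξ)]
      simpa using hC₁ ξ
  have hmin (ξ : ℝ) : ‖ψ ξ‖ ^ 2 ≤ C * max C₁ C₂ * min |ξ| |ξ|⁻¹ := by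
    rw [sq, mul_assoc]
    refine mul_le_mul (by simpa using hC ξ) ?_ (norm_nonneg _) hC0.le
    rcases min_choice |ξ| |ξ|⁻¹ with h | h <;> rw [h]
    · exact (hsmall ξ).trans (by gcongr; exact le_max_right _ _)
    · exact (hlarge ξ).trans (by gcongr; exact le_max_left _ _)
  refine ⟨ENNReal.ofReal (C * max C₁ C₂), ENNReal.ofReal_ne_top, fun ξ => ?_⟩
  rw [enorm_rpow_two_eq_ofReal, ← ENNReal.ofReal_mul (by positivity)]
  exact ENNReal.ofReal_le_ofReal (hmin ξ)

end Synthesis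

/-! ### The converse of Hölder's inequality -/

section ConverseHolder

theorem le_rpow_of_le_mul_rpow_one_div {p q : ℝ} (hpq : p.HolderConjugate q) {M Y : ℝ≥0∞}
    (hY : Y ≠ ⊤) (h : Y ≤ M * Y ^ (1 / p)) : Y ≤ M ^ q := by
  rcases eq_or_ne Y 0 with rfl | hY0
  · exact zero_le
  have hroot : Y ^ (1 / p) ≠ 0 := (ENNReal.rpow_pos (pos_iff_ne_zero.2 hY0) hY).ne'
  have hroot' : Y ^ (1 / p) ≠ ⊤ := ENNReal.rpow_ne_top_of_nonneg hpq.one_div_nonneg hY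
  have hsplit : Y = Y ^ (1 / q) * Y ^ (1 / p) := by
    rw [← ENNReal.rpow_add_of_nonneg _ _ hpq.symm.one_div_nonneg hpq.one_div_nonneg, one_div,
      one_div, hpq.symm.inv_add_inv_eq_one, ENNReal.rpow_one]
  refine (ENNReal.rpow_inv_le_iff hpq.symm.pos).1 ?_
  rw [← one_div]
  exact (ENNReal.mul_le_mul_iff_left hroot hroot').1 (hsplit.symm.trans_le h)

variable {𝕜 F : Type*} [RCLike 𝕜] [NormedAddCommGroup F] [InnerProductSpace 𝕜 F] {p q : ℝ}

theorem norm_rpow_sub_two_smul (hq : 1 < q) (v : F) :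
    ‖((‖v‖ ^ (q - 2) : ℝ) : 𝕜) • v‖ = ‖v‖ ^ (q - 1) := by
  rcases eq_or_ne v 0 with rfl | hv
  · simp [Real.zero_rpow (sub_pos.2 hq).ne']
  · rw [norm_smul, RCLike.norm_ofReal, abs_of_nonneg (by positivity),
      ← Real.rpow_add_one (norm_ne_zero_iff.2 hv)]
    ring_nf

theorem inner_rpow_sub_two_smul_self (hq : 0 < q) (v : F) :
    inner 𝕜 (((‖v‖ ^ (q - 2) : ℝ) : 𝕜) • v) v = ((‖v‖ ^ q : ℝ) : 𝕜) := by
  rcases eq_or_ne v 0 with rfl | hv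
  · simp [Real.zero_rpow hq.ne']
  · rw [inner_smul_left, RCLike.conj_ofReal, inner_self_eq_norm_sq_to_K, ← RCLike.ofReal_pow,
      ← RCLike.ofReal_mul, ← Real.rpow_natCast, ← Real.rpow_add (norm_pos_iff.2 hv)]
    norm_num

theorem enorm_inner_le (v w : F) : ‖inner 𝕜 v w‖ₑ ≤ ‖v‖ₑ * ‖w‖ₑ := by
  simp only [← ofReal_norm]
  rw [← ENNReal.ofReal_mul (norm_nonneg v)]
  exact ENNReal.ofReal_le_ofReal (norm_inner_le_norm v w)

variable {α : Type*}

/-- The extremal function for Hölder's inequality against `G` in `L^q(s)`. -/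
noncomputable def holderTest (𝕜 : Type*) [RCLike 𝕜] [InnerProductSpace 𝕜 F] (q : ℝ) (s : Set α)
    (G : α → F) : α → F :=
  s.indicator fun x => ((‖G x‖ ^ (q - 2) : ℝ) : 𝕜) • G x

theorem norm_holderTest (hq : 1 < q) (s : Set α) (G : α → F) (x : α) :
    ‖holderTest 𝕜 q s G x‖ = s.indicator (fun x => ‖G x‖ ^ (q - 1)) x := by
  simp only [holderTest, norm_indicator_eq_indicator_norm, norm_rpow_sub_two_smul hq]

theorem enorm_holderTest_rpow (hpq : p.HolderConjugate q) (s : Set α) (G : α → F) (x : α) :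
    ‖holderTest 𝕜 q s G x‖ₑ ^ p = s.indicator (fun x => ‖G x‖ₑ ^ q) x := by
  rw [← ofReal_norm, norm_holderTest hpq.symm.lt]
  by_cases hx : x ∈ s
  · rw [Set.indicator_of_mem hx, Set.indicator_of_mem hx,
      ENNReal.ofReal_rpow_of_nonneg (by positivity) hpq.nonneg, ← Real.rpow_mul (norm_nonneg _),
      hpq.symm.sub_one_mul_conj, ← ofReal_norm,
      ENNReal.ofReal_rpow_of_nonneg (norm_nonneg _) hpq.symm.nonneg]
  · simp [hx, hpq.pos]

theorem inner_holderTest (hq : 0 < q) (s : Set α) (G : α → F) (x : α) :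
    inner 𝕜 (holderTest 𝕜 q s G x) (G x) = s.indicator (fun x => ((‖G x‖ ^ q : ℝ) : 𝕜)) x := by
  by_cases hx : x ∈ s <;> simp only [holderTest, hx, Set.indicator_of_mem, not_false_eq_true,
    Set.indicator_of_notMem, inner_zero_left, inner_rpow_sub_two_smul_self hq]

variable [MeasurableSpace α] {μ : Measure α} {G : α → F} {M : ℝ≥0∞}

theorem stronglyMeasurable_holderTest (hG : StronglyMeasurable G) {s : Set α}
    (hs : MeasurableSet s) : StronglyMeasurable (holderTest 𝕜 q s G) :=
  ((RCLike.continuous_ofReal.comp_stronglyMeasurable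
    (hG.norm.measurable.pow_const _).stronglyMeasurable).smul hG).indicator hs

theorem enorm_integral_inner_holderTest (hq : 0 < q) {s : Set α} (hs : MeasurableSet s)
    (hG : IntegrableOn (fun x => ‖G x‖ ^ q) s μ) :
    ‖∫ x, inner 𝕜 (holderTest 𝕜 q s G x) (G x) ∂μ‖ₑ = ∫⁻ x in s, ‖G x‖ₑ ^ q ∂μ := by
  simp only [inner_holderTest hq]
  rw [integral_indicator hs, integral_ofReal, ← ofReal_norm, RCLike.norm_ofReal,
    abs_of_nonneg (integral_nonneg fun x => by positivity),
    ofReal_integral_eq_lintegral_ofReal hG (.of_forall fun x => by positivity)]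
  simp only [← ofReal_norm, ENNReal.ofReal_rpow_of_nonneg (norm_nonneg _) hq.le]

theorem setLIntegral_enorm_rpow_le_of_forall_inner (hpq : p.HolderConjugate q)
    (hG : StronglyMeasurable G)
    (h : ∀ u : α → F, StronglyMeasurable u → Integrable u μ →
      ‖∫ x, inner 𝕜 (u x) (G x) ∂μ‖ₑ ≤ M * (∫⁻ x, ‖u x‖ₑ ^ p ∂μ) ^ (1 / p))
    {s : Set α} (hs : MeasurableSet s) (hμs : μ s ≠ ⊤) {c : ℝ} (hc : ∀ x ∈ s, ‖G x‖ ≤ c) :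
    ∫⁻ x in s, ‖G x‖ₑ ^ q ∂μ ≤ M ^ q := by
  have hq := hpq.symm
  have hint {r : ℝ} (hr : 0 ≤ r) : IntegrableOn (fun x => ‖G x‖ ^ r) s μ := by
    refine Measure.integrableOn_of_bounded (M := c ^ r) hμs
      (hG.norm.measurable.pow_const r).aestronglyMeasurable
      (ae_restrict_of_forall_mem hs fun x hx => ?_)
    rw [Real.norm_of_nonneg (by positivity)]
    exact Real.rpow_le_rpow (norm_nonneg _) (hc x hx) hr
  have hu := stronglyMeasurable_holderTest (𝕜 := 𝕜) (q := q) hG hs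
  have hu_int : Integrable (holderTest 𝕜 q s G) μ :=
    ((hint hq.sub_one_pos.le).integrable_indicator hs).mono' hu.aestronglyMeasurable
      (.of_forall fun x => (norm_holderTest hq.lt s G x).le)
  have hpair := enorm_integral_inner_holderTest (𝕜 := 𝕜) hq.pos hs (hint hq.nonneg)
  refine le_rpow_of_le_mul_rpow_one_div hpq (hpair ▸ enorm_ne_top) ?_
  simpa only [hpair, enorm_holderTest_rpow hpq, lintegral_indicator hs] using h _ hu hu_int

theorem lintegral_enorm_rpow_le_of_forall_inner [SigmaFinite μ] (hpq : p.HolderConjugate q)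
    (hG : StronglyMeasurable G)
    (h : ∀ u : α → F, StronglyMeasurable u → Integrable u μ →
      ‖∫ x, inner 𝕜 (u x) (G x) ∂μ‖ₑ ≤ M * (∫⁻ x, ‖u x‖ₑ ^ p ∂μ) ^ (1 / p)) :
    ∫⁻ x, ‖G x‖ₑ ^ q ∂μ ≤ M ^ q := by
  let s (n : ℕ) : Set α := spanningSets μ n ∩ (fun x => ‖G x‖) ⁻¹' Set.Iic (n : ℝ)
  have hs (n : ℕ) : MeasurableSet (s n) :=
    (measurableSet_spanningSets μ n).inter (hG.norm.measurable measurableSet_Iic)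
  have hlevel : Monotone fun n : ℕ => (fun x => ‖G x‖) ⁻¹' Set.Iic (n : ℝ) := fun m n hmn =>
    Set.preimage_mono (Set.Iic_subset_Iic.2 (Nat.cast_le.2 hmn))
  have hs_mono : Monotone s := (monotone_spanningSets μ).inter hlevel
  have hs_univ : ⋃ n, s n = Set.univ := by
    rw [Set.iUnion_inter_of_monotone (monotone_spanningSets μ) hlevel, iUnion_spanningSets,
      Set.univ_inter]
    exact Set.eq_univ_of_forall fun x => Set.mem_iUnion.2 (exists_nat_ge ‖G x‖)
  rw [← setLIntegral_univ, ← hs_univ, ← withDensity_apply _ (.iUnion hs), hs_mono.measure_iUnion]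
  refine iSup_le fun n => ?_
  rw [withDensity_apply _ (hs n)]
  exact setLIntegral_enorm_rpow_le_of_forall_inner hpq hG h (hs n)
    ((measure_mono Set.inter_subset_left).trans_lt (measure_spanningSets_lt_top μ n)).ne
    fun x hx => hx.2

end ConverseHolder

/-! ### Duality for convolution operators -/

section Duality

variable {E F : Type*} [NormedAddCommGroup E] [InnerProductSpace ℂ E]
  [NormedAddCommGroup F] [InnerProductSpace ℂ F] {K : ℝ → E →L[ℂ] F} {p q : ℝ}

theorem IsRegularKernel.integrable_inner_kernel (hK : IsRegularKernel K)
    (hpq : p.HolderConjugate q) {u : ℝ → F} (hu : StronglyMeasurable u) (hu_int : Integrable u)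
    {h : ℝ → E} (hh : StronglyMeasurable h) (hhq : ∫⁻ z, ‖h z‖ₑ ^ q ≠ ⊤) :
    Integrable (fun r : ℝ × ℝ => inner ℂ (u r.1) (K (r.1 - r.2) (h r.2)))
      (volume.prod volume) := by
  have hmeas : StronglyMeasurable fun r : ℝ × ℝ => inner ℂ (u r.1) (K (r.1 - r.2) (h r.2)) :=
    (hu.comp_measurable measurable_fst).inner (stronglyMeasurable_kernel_apply hK.continuous hh)
  refine ⟨hmeas.aestronglyMeasurable, ?_⟩
  rw [HasFiniteIntegral, lintegral_prod _ hmeas.enorm.aemeasurable]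
  have hinner (y : ℝ) : ∫⁻ z, ‖inner ℂ (u y) (K (y - z) (h z))‖ₑ ≤
      ‖u y‖ₑ * ((∫⁻ z, ‖K z‖ₑ ^ p) ^ (1 / p) * (∫⁻ z, ‖h z‖ₑ ^ q) ^ (1 / q)) := by
    refine (lintegral_mono fun z => enorm_inner_le (u y) _).trans ?_
    rw [lintegral_const_mul' _ _ enorm_ne_top]
    gcongr
    exact lintegral_kernel_apply_le hK.continuous hh hpq.symm y
  refine (lintegral_mono hinner).trans_lt ?_
  rw [lintegral_mul_const _ hu.enorm]
  exact ENNReal.mul_lt_top hu_int.2 (ENNReal.mul_lt_top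
    (hK.rpow_lintegral_ne_top hpq.lt.le).lt_top
    (ENNReal.rpow_lt_top_of_nonneg hpq.symm.one_div_nonneg hhq))

variable [CompleteSpace E] [CompleteSpace F]

/-- The kernel of the adjoint of the convolution operator with kernel `K`. -/
noncomputable def adjointKernel (K : ℝ → E →L[ℂ] F) (y : ℝ) : F →L[ℂ] E :=
  ContinuousLinearMap.adjoint (K (-y))

theorem adjointKernel_adjointKernel (K : ℝ → E →L[ℂ] F) :
    adjointKernel (adjointKernel K) = K := by
  funext y
  simp [adjointKernel]

theorem IsRegularKernel.adjoint (hK : IsRegularKernel K) : IsRegularKernel (adjointKernel K) where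
  continuous := ContinuousLinearMap.adjoint.continuous.comp (hK.continuous.comp continuous_neg)
  integrable := by
    refine hK.integrable.comp_neg.norm.mono' ?_ (.of_forall fun y => ?_)
    · exact (ContinuousLinearMap.adjoint.continuous.comp
        (hK.continuous.comp continuous_neg)).aestronglyMeasurable
    · exact (ContinuousLinearMap.adjoint.norm_map _).le
  bounded := by
    obtain ⟨C, hC⟩ := hK.bounded
    exact ⟨C, fun y => (ContinuousLinearMap.adjoint.norm_map _).trans_le (hC _)⟩

theorem HormanderBound.adjoint {B : ℝ≥0∞} (hB : HormanderBound K B) :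
    HormanderBound (adjointKernel K) B := by
  intro s
  have h := (Measure.measurePreserving_neg (volume : Measure ℝ)).setLIntegral_comp_preimage_emb
    (MeasurableEquiv.neg ℝ).measurableEmbedding (fun y => ‖K (y - -s) - K y‖ₑ)
    {y : ℝ | 2 * |-s| ≤ |y|}
  have hpt (y : ℝ) : ‖adjointKernel K (y - s) - adjointKernel K y‖ₑ = ‖K (-y - -s) - K (-y)‖ₑ := by
    rw [adjointKernel, adjointKernel, ← map_sub, LinearIsometryEquiv.enorm_map, neg_sub,
      sub_neg_eq_add, neg_add_eq_sub]
  simp only [hpt]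
  refine (le_of_eq ?_).trans (hB (-s))
  simpa using h

theorem IsRegularKernel.integral_inner_kernelConv (hK : IsRegularKernel K)
    (hpq : p.HolderConjugate q) {u : ℝ → F} (hu : StronglyMeasurable u) (hu_int : Integrable u)
    {h : ℝ → E} (hh : StronglyMeasurable h) (hhq : ∫⁻ z, ‖h z‖ₑ ^ q ≠ ⊤) :
    ∫ y, inner ℂ (u y) (kernelConv K h y) =
      ∫ z, inner ℂ (kernelConv (adjointKernel K) u z) (h z) := by
  have hleft (y : ℝ) : inner ℂ (u y) (kernelConv K h y) =
      ∫ z, inner ℂ (u y) (K (y - z) (h z)) :=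
    (integral_inner (hK.integrable_apply_of_rpow hh hpq.symm hhq y) (u y)).symm
  have hright (z : ℝ) : inner ℂ (kernelConv (adjointKernel K) u z) (h z) =
      ∫ y, inner ℂ (u y) (K (y - z) (h z)) := by
    rw [← inner_conj_symm, kernelConv,
      ← integral_inner (hK.adjoint.integrable_apply_of_integrable hu_int z), ← integral_conj]
    simp only [inner_conj_symm, adjointKernel, neg_sub, ContinuousLinearMap.adjoint_inner_left]
  simp only [hleft, hright]
  exact integral_integral_swap (hK.integrable_inner_kernel hpq hu hu_int hh hhq)

theorem StrongTypeBound.of_adjoint (hK : IsRegularKernel K) (hpq : p.HolderConjugate q)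
    {C : ℝ≥0∞} (hC : C ≠ 0) (hKC : StrongTypeBound (adjointKernel K) p C) :
    StrongTypeBound K q (C ^ (q / p)) := by
  intro h hh
  by_cases hhq : ∫⁻ z, ‖h z‖ₑ ^ q = ⊤
  · rw [hhq, ENNReal.mul_top (by
      simp [ENNReal.rpow_eq_zero_iff, hC, (div_pos hpq.symm.pos hpq.pos).le])]
    exact le_top
  have hpair (u : ℝ → F) (hu : StronglyMeasurable u) (hu_int : Integrable u) :
      ‖∫ y, inner ℂ (u y) (kernelConv K h y)‖ₑ ≤
        (C ^ (1 / p) * (∫⁻ z, ‖h z‖ₑ ^ q) ^ (1 / q)) * (∫⁻ y, ‖u y‖ₑ ^ p) ^ (1 / p) := by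
    have hKu := stronglyMeasurable_kernelConv hK.adjoint.continuous hu
    calc ‖∫ y, inner ℂ (u y) (kernelConv K h y)‖ₑ
        ≤ ∫⁻ z, ‖kernelConv (adjointKernel K) u z‖ₑ * ‖h z‖ₑ := by
          rw [hK.integral_inner_kernelConv hpq hu hu_int hh hhq]
          exact (enorm_integral_le_lintegral_enorm _).trans
            (lintegral_mono fun z => enorm_inner_le _ _)
      _ ≤ (∫⁻ z, ‖kernelConv (adjointKernel K) u z‖ₑ ^ p) ^ (1 / p) *
            (∫⁻ z, ‖h z‖ₑ ^ q) ^ (1 / q) :=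
          ENNReal.lintegral_mul_le_Lp_mul_Lq _ hpq hKu.enorm.aemeasurable hh.enorm.aemeasurable
      _ ≤ (C * ∫⁻ y, ‖u y‖ₑ ^ p) ^ (1 / p) * (∫⁻ z, ‖h z‖ₑ ^ q) ^ (1 / q) := by
          have := hpq.one_div_nonneg
          gcongr
          exact hKC u hu
      _ = _ := by
          rw [ENNReal.mul_rpow_of_nonneg _ _ hpq.one_div_nonneg, mul_right_comm]
  refine (lintegral_enorm_rpow_le_of_forall_inner hpq
    (stronglyMeasurable_kernelConv hK.continuous hh) hpair).trans_eq ?_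
  rw [ENNReal.mul_rpow_of_nonneg _ _ hpq.symm.nonneg, ← ENNReal.rpow_mul, ← ENNReal.rpow_mul,
    one_div_mul_cancel hpq.symm.ne_zero, ENNReal.rpow_one, one_div_mul_eq_div]

end Duality

/-! ### The Calderón–Zygmund theorem for all exponents -/

section AllExponents

/-- The `Lᵖ` constant, `1 < p < ∞`, of a convolution operator between Hilbert spaces with `L²`
constant `A` and Hörmander constant `B`; for `2 < p` it is obtained by duality. -/
noncomputable def strongTypeConst (p : ℝ) (A B : ℝ≥0∞) : ℝ≥0∞ :=
  if p < 2 then calderonZygmundConst p A B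
  else if p = 2 then A
  else calderonZygmundConst p.conjExponent A B ^ (p / p.conjExponent)

variable {p : ℝ} {A B : ℝ≥0∞}

theorem strongTypeConst_ne_top (hp : 1 < p) (hA : A ≠ ⊤) (hB : B ≠ ⊤) :
    strongTypeConst p A B ≠ ⊤ := by
  have hpq := Real.HolderConjugate.conjExponent hp
  unfold strongTypeConst
  split_ifs
  · exact calderonZygmundConst_ne_top hpq.nonneg hA hB
  · exact hA
  · exact ENNReal.rpow_ne_top_of_nonneg (div_pos hpq.pos hpq.symm.pos).le
      (calderonZygmundConst_ne_top hpq.symm.nonneg hA hB)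

theorem conjExponent_lt_two (hp : 2 < p) : p.conjExponent < 2 := by
  rw [Real.conjExponent, div_lt_iff₀ (by linarith)]
  linarith

variable {E F : Type*} [NormedAddCommGroup E] [InnerProductSpace ℂ E] [CompleteSpace E]
  [NormedAddCommGroup F] [InnerProductSpace ℂ F] [CompleteSpace F] {K : ℝ → E →L[ℂ] F}

theorem StrongTypeBound.adjoint_two (hK : IsRegularKernel K) (hA : A ≠ 0)
    (hKA : StrongTypeBound K 2 A) : StrongTypeBound (adjointKernel K) 2 A := by
  simpa using StrongTypeBound.of_adjoint hK.adjoint Real.HolderConjugate.two_two hA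
    ((adjointKernel_adjointKernel K).symm ▸ hKA)

theorem StrongTypeBound.of_hormander (hK : IsRegularKernel K) (hA : A ≠ 0)
    (hKA : StrongTypeBound K 2 A) (hB : HormanderBound K B) (hp : 1 < p) :
    StrongTypeBound K p (strongTypeConst p A B) := by
  have hpq := Real.HolderConjugate.conjExponent hp
  unfold strongTypeConst
  split_ifs with hlt heq
  · exact hKA.of_hormander_of_lt_two hK hB hp hlt
  · rwa [heq]
  · have hgt : 2 < p := lt_of_le_of_ne (not_lt.1 hlt) (Ne.symm heq)
    exact .of_adjoint hK hpq.symm (calderonZygmundConst_ne_zero hpq.symm.lt)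
      ((hKA.adjoint_two hK hA).of_hormander_of_lt_two hK.adjoint hB.adjoint hpq.symm.lt
        (conjExponent_lt_two hgt))

theorem exists_strongTypeBound_synthesisKernel {ψ : 𝓢(ℝ, ℂ)} (hψ : ψ 0 = 0) (hp : 1 < p) :
    ∃ C : ℝ≥0∞, C ≠ ⊤ ∧ ∀ S : Finset ℤ, StrongTypeBound (synthesisKernel (𝓕⁻ ψ) S) p C := by
  obtain ⟨A, hA, hψA⟩ := exists_enorm_rpow_two_le_min hψ
  have hΦ (ξ : ℝ) : ‖𝓕 (𝓕⁻ ψ) ξ‖ₑ ^ (2 : ℝ) ≤ A * ENNReal.ofReal (min |ξ| |ξ|⁻¹) := by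
    rw [FourierTransform.fourier_fourierInv_eq]
    exact hψA ξ
  have hD := dyadicSumConst_ne_top
  exact ⟨strongTypeConst p (A * dyadicSumConst + 1) (translationConst (𝓕⁻ ψ) * dyadicSumConst),
    strongTypeConst_ne_top hp (by finiteness) (ENNReal.mul_ne_top (translationConst_ne_top _) hD),
    fun S => .of_hormander (isRegularKernel_synthesisKernel _ S) (by simp)
      (strongTypeBound_two_synthesisKernel S hA hΦ) (hormanderBound_synthesisKernel _ S) hp⟩

end AllExponents

/-! ### Shears along a foliation -/

section Foliation

theorem lintegral_comp_le_of_antilipschitz {G : ℝ → ℝ} (hGm : Measurable G) {a : ℝ≥0}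
    (hG : AntilipschitzWith a G) {H : ℝ → ℝ≥0∞} (hH : Measurable H) :
    ∫⁻ x, H (G x) ≤ a * ∫⁻ x, H x := by
  rw [← lintegral_map hH hGm, ← smul_eq_mul, ← lintegral_smul_measure]
  refine lintegral_mono' (Measure.le_iff.2 fun s hs => ?_) le_rfl
  rw [Measure.map_apply hGm hs, Measure.smul_apply, smul_eq_mul]
  simpa [hausdorffMeasure_real] using hG.hausdorffMeasure_preimage_le zero_le_one s

variable {g : ℝ × ℝ → ℝ}

section Lipschitz

variable {a₀ : ℝ}

theorem antilipschitzWith_of_foliation (ha₀ : 0 < a₀)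
    (hg : ∀ x x' y : ℝ, x < x' → (x' - x) / a₀ ≤ g (x', y) - g (x, y)) (y : ℝ) :
    AntilipschitzWith a₀.toNNReal fun x => g (x, y) := by
  refine AntilipschitzWith.of_le_mul_dist fun x x' => ?_
  wlog hx : x ≤ x' generalizing x x'
  · rw [dist_comm, dist_comm (g _)]
    exact this x' x (le_of_not_ge hx)
  rcases hx.eq_or_lt with rfl | hx
  · simp
  rw [Real.coe_toNNReal _ ha₀.le, dist_comm, dist_comm (g _), Real.dist_eq, Real.dist_eq,
    abs_of_pos (sub_pos.2 hx)]
  exact ((div_le_iff₀' ha₀).1 (hg x x' y hx)).trans (by gcongr; exact le_abs_self _)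

theorem lipschitzWith_of_foliation (ha₀ : 0 < a₀)
    (hg : ∀ x x' y : ℝ, x < x' →
      (x' - x) / a₀ ≤ g (x', y) - g (x, y) ∧ g (x', y) - g (x, y) ≤ a₀ * (x' - x)) (y : ℝ) :
    LipschitzWith a₀.toNNReal fun x => g (x, y) := by
  refine LipschitzWith.of_dist_le_mul fun x x' => ?_
  wlog hx : x ≤ x' generalizing x x'
  · rw [dist_comm, dist_comm x]
    exact this x' x (le_of_not_ge hx)
  rcases hx.eq_or_lt with rfl | hx
  · simp
  obtain ⟨hlow, hhigh⟩ := hg x x' y hx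
  have hpos : 0 ≤ (x' - x) / a₀ := div_nonneg (sub_pos.2 hx).le ha₀.le
  rwa [Real.coe_toNNReal _ ha₀.le, dist_comm, dist_comm x, Real.dist_eq, Real.dist_eq,
    abs_of_pos (sub_pos.2 hx), abs_of_nonneg (hpos.trans hlow)]

theorem continuous_of_foliation {b₀ : ℝ} (ha₀ : 0 < a₀) (hb₀ : 0 ≤ b₀)
    (hg : ∀ x x' y : ℝ, x < x' →
      (x' - x) / a₀ ≤ g (x', y) - g (x, y) ∧ g (x', y) - g (x, y) ≤ a₀ * (x' - x))
    (hg' : ∀ x y y' : ℝ, |g (x, y) - g (x, y')| ≤ b₀ * |y - y'|) : Continuous g := by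
  have hvert (x : ℝ) : LipschitzWith b₀.toNNReal fun y => g (x, y) := by
    refine LipschitzWith.of_dist_le_mul fun y y' => ?_
    rw [Real.coe_toNNReal _ hb₀, Real.dist_eq, Real.dist_eq]
    exact hg' x y y'
  exact (LipschitzWith.uncurry (f := fun x y => g (x, y)) (lipschitzWith_of_foliation ha₀ hg)
    hvert).continuous

end Lipschitz

variable {a : ℝ≥0} {H : ℝ × ℝ → ℝ≥0∞}

theorem measurable_comp_foliation {β : Type*} [MeasurableSpace β] {h : ℝ × ℝ → β}
    (hg : Measurable g) (hh : Measurable h) : Measurable fun r : ℝ × ℝ => h (g r, r.2) :=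
  hh.comp (hg.prodMk measurable_snd)

theorem lintegral_foliation_le (hg : Measurable g)
    (hga : ∀ y, AntilipschitzWith a fun x => g (x, y)) (hH : Measurable H) :
    ∫⁻ x, ∫⁻ y, H (g (x, y), y) ≤ a * ∫⁻ r, H r := by
  rw [lintegral_lintegral_swap (measurable_comp_foliation hg hH).aemeasurable,
    Measure.volume_eq_prod, lintegral_prod_symm _ hH.aemeasurable,
    ← lintegral_const_mul _ hH.lintegral_prod_left']
  exact lintegral_mono fun y => lintegral_comp_le_of_antilipschitz
    (hg.comp measurable_prodMk_right) (hga y) (hH.comp measurable_prodMk_right)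

theorem ae_lintegral_foliation_ne_top (hg : Measurable g)
    (hga : ∀ y, AntilipschitzWith a fun x => g (x, y)) (hH : Measurable H)
    (hfin : ∫⁻ r, H r ≠ ⊤) : ∀ᵐ x, ∫⁻ y, H (g (x, y), y) ≠ ⊤ :=
  (ae_lt_top (measurable_comp_foliation hg hH).lintegral_prod_right'
    ((lintegral_foliation_le hg hga hH).trans_lt
      (ENNReal.mul_lt_top ENNReal.coe_lt_top hfin.lt_top)).ne).mono fun _ => LT.lt.ne

theorem StrongTypeBound.lintegral_foliation_le {E F : Type*} [NormedAddCommGroup E]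
    [NormedSpace ℂ E] [NormedAddCommGroup F] [NormedSpace ℂ F] {K : ℝ → E →L[ℂ] F} {q : ℝ}
    {C : ℝ≥0∞} (hC : StrongTypeBound K q C) (hg : Measurable g)
    (hga : ∀ y, AntilipschitzWith a fun x => g (x, y)) {h : ℝ × ℝ → E} (hh : StronglyMeasurable h) :
    ∫⁻ r : ℝ × ℝ, ‖kernelConv K (fun z => h (g (r.1, z), z)) r.2‖ₑ ^ q ≤
      C * (a * ∫⁻ r, ‖h r‖ₑ ^ q) := by
  have hH : Measurable fun r => ‖h r‖ₑ ^ q := hh.enorm.pow_const q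
  calc ∫⁻ r : ℝ × ℝ, ‖kernelConv K (fun z => h (g (r.1, z), z)) r.2‖ₑ ^ q
      ≤ ∫⁻ x, ∫⁻ y, ‖kernelConv K (fun z => h (g (x, z), z)) y‖ₑ ^ q := lintegral_prod_le _
    _ ≤ ∫⁻ x, C * ∫⁻ y, ‖h (g (x, y), y)‖ₑ ^ q :=
        lintegral_mono fun x => hC _ (hh.comp_measurable
          ((hg.comp measurable_prodMk_left).prodMk measurable_id))
    _ = C * ∫⁻ x, ∫⁻ y, ‖h (g (x, y), y)‖ₑ ^ q :=
        lintegral_const_mul _ (measurable_comp_foliation hg hH).lintegral_prod_right'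
    _ ≤ C * (a * ∫⁻ r, ‖h r‖ₑ ^ q) := by
        gcongr
        exact _root_.lintegral_foliation_le hg hga hH

end Foliation

/-! ### Finitely supported families -/

section Family

variable {α : Type*} {S : Finset ℤ} {f : ℤ → α → ℂ}

/-- The finitely many functions `f k`, `k ∈ S`, as one function with values in a Hilbert space,
whose norm is the square function of the family. -/
def familyVector (S : Finset ℤ) (f : ℤ → α → ℂ) (r : α) : EuclideanSpace ℂ S :=
  WithLp.toLp 2 fun k => f k r

theorem stronglyMeasurable_familyVector [MeasurableSpace α] (hf : ∀ k, Measurable (f k)) :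
    StronglyMeasurable (familyVector S f) :=
  ((WithLp.measurable_toLp 2 (S → ℂ)).comp
    (measurable_pi_lambda _ fun k => hf k)).stronglyMeasurable

theorem enorm_familyVector_rpow (hf : Function.support f ⊆ S) (q : ℝ) (r : α) :
    ‖familyVector S f r‖ₑ ^ q = (∑' k : ℤ, (‖f k r‖₊ : ℝ≥0∞) ^ 2) ^ (q / 2) := by
  have hzero (k : ℤ) (hk : k ∉ S) : f k = 0 := Function.notMem_support.1 fun h => hk (hf h)
  have hsq : ‖familyVector S f r‖ₑ ^ (2 : ℝ) = ∑' k : ℤ, (‖f k r‖₊ : ℝ≥0∞) ^ 2 := by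
    rw [tsum_eq_sum (s := S) fun k hk => by simp [hzero k hk], ← Finset.sum_coe_sort,
      enorm_euclideanSpace_rpow_two]
    simp [familyVector, enorm_eq_nnnorm]
  rw [← hsq, ← ENNReal.rpow_mul, mul_div_cancel₀ q two_ne_zero]

theorem tsum_convolution_dyadicDilate_eq (Φ : 𝓢(ℝ, ℂ)) {u : ℤ → ℝ → ℂ}
    (hu : Function.support u ⊆ S) (hum : ∀ k, Measurable (u k)) {q : ℝ} (hq : 1 < q)
    (hfin : ∫⁻ z, ‖familyVector S u z‖ₑ ^ q ≠ ⊤) (y : ℝ) :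
    ∑' k : ℤ, ∫ z, dyadicDilate Φ k (y - z) * u k z =
      kernelConv (synthesisKernel Φ S) (familyVector S u) y := by
  have hzero (k : ℤ) (hk : k ∉ S) : u k = 0 := Function.notMem_support.1 fun h => hk (hu h)
  rw [tsum_eq_sum (s := S) fun k hk => by simp [hzero k hk], ← Finset.sum_coe_sort,
    kernelConv_synthesisKernel Φ (stronglyMeasurable_familyVector hum)
      (Real.HolderConjugate.conjExponent hq) hfin]
  rfl

theorem eLpNorm_tsum_convolution_foliation_le {Φ : 𝓢(ℝ, ℂ)} {q : ℝ} (hq : 1 < q) {C : ℝ≥0∞}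
    (hC : ∀ S : Finset ℤ, StrongTypeBound (synthesisKernel Φ S) q C) {g : ℝ × ℝ → ℝ}
    (hg : Measurable g) {a : ℝ≥0} (hga : ∀ y, AntilipschitzWith a fun x => g (x, y))
    {f : ℤ → ℝ × ℝ → ℂ} (hfs : (Function.support f).Finite) (hf : ∀ k, Measurable (f k))
    (hfin : ∫⁻ r, (∑' k : ℤ, (‖f k r‖₊ : ℝ≥0∞) ^ 2) ^ (q / 2) ≠ ⊤) :
    eLpNorm (fun r : ℝ × ℝ => ∑' k : ℤ, ∫ z, dyadicDilate Φ k (r.2 - z) * f k (g (r.1, z), z))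
        (ENNReal.ofReal q) volume ≤
      (C * a) ^ (1 / q) *
        (∫⁻ r, (∑' k : ℤ, (‖f k r‖₊ : ℝ≥0∞) ^ 2) ^ (q / 2)) ^ (1 / q) := by
  set S := hfs.toFinset
  have hS : Function.support f ⊆ S := hfs.coe_toFinset.ge
  have hmeas := stronglyMeasurable_familyVector (S := S) hf
  have hsheet (x : ℝ) : Function.support (fun k z => f k (g (x, z), z)) ⊆ S := fun k hk =>
    hS fun h => hk (funext fun z => by simp [h])
  simp only [← enorm_familyVector_rpow hS] at hfin ⊢
  have hae : ∀ᵐ r : ℝ × ℝ, ∑' k : ℤ, ∫ z, dyadicDilate Φ k (r.2 - z) * f k (g (r.1, z), z) =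
      kernelConv (synthesisKernel Φ S) (fun z => familyVector S f (g (r.1, z), z)) r.2 :=
    (Measure.quasiMeasurePreserving_fst.ae (ae_lintegral_foliation_ne_top hg hga
      (hmeas.enorm.pow_const q) hfin)).mono fun r hr =>
        tsum_convolution_dyadicDilate_eq Φ (hsheet r.1)
          (fun k => (hf k).comp ((hg.comp measurable_prodMk_left).prodMk measurable_id)) hq hr r.2
  have hq0 : 0 < q := zero_lt_one.trans hq
  rw [eLpNorm_congr_ae hae, eLpNorm_ofReal_eq_lintegral hq0,
    ← ENNReal.mul_rpow_of_nonneg _ _ (by positivity), mul_assoc]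
  gcongr
  exact (hC S).lintegral_foliation_le hg hga hmeas

theorem integral_dilate_mul_exp_eq (ψ : 𝓢(ℝ, ℂ)) (k : ℤ) (y : ℝ) :
    ∫ t : ℝ, ψ ((2 : ℝ) ^ (-k) * t) *
        Complex.exp (2 * (Real.pi : ℂ) * Complex.I * (t : ℂ) * (y : ℂ)) =
      dyadicDilate (𝓕⁻ ψ) k y := by
  have hk : (0 : ℝ) < (2 : ℝ) ^ k := by positivity
  have h := Measure.integral_comp_mul_left (fun t : ℝ => ψ t * Complex.exp
    (2 * (Real.pi : ℂ) * Complex.I * (((2 : ℝ) ^ k * t : ℝ) : ℂ) * (y : ℂ))) ((2 : ℝ) ^ (-k))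
  rw [zpow_neg, inv_inv, abs_of_pos hk] at h
  simp only [mul_inv_cancel_left₀ hk.ne'] at h
  rw [dyadicDilate_apply, SchwartzMap.fourierInv_coe, Real.fourierInv_eq', zpow_neg, h]
  congr 1
  refine integral_congr_ae (.of_forall fun t => ?_)
  simp only [smul_eq_mul]
  rw [mul_comm]
  congr 2
  simp
  ring

end Family

theorem stmt7_general {q : ℝ} (hq : 1 < q) (ψ : 𝓢(ℝ, ℂ)) (hψ : ψ 0 = 0) (φ : ℤ → ℝ → ℂ)
    (hφ : ∀ (k : ℤ) (y : ℝ), φ k y = ∫ t : ℝ, ψ ((2 : ℝ) ^ (-k) * t) *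
      Complex.exp (2 * (Real.pi : ℂ) * Complex.I * (t : ℂ) * (y : ℂ))) (a : ℝ≥0) :
    ∃ C : ℝ, 0 < C ∧ ∀ g : ℝ × ℝ → ℝ, Measurable g →
      (∀ y, AntilipschitzWith a fun x => g (x, y)) →
      ∀ f : ℤ → ℝ × ℝ → ℂ, (Function.support f).Finite → (∀ k, Measurable (f k)) →
      eLpNorm (fun r : ℝ × ℝ => ∑' k : ℤ, ∫ z, φ k (r.2 - z) * f k (g (r.1, z), z))
        (ENNReal.ofReal q) volume ≤
      ENNReal.ofReal C *
        (∫⁻ r : ℝ × ℝ, (∑' k : ℤ, (‖f k r‖₊ : ℝ≥0∞) ^ 2) ^ (q / 2)) ^ (1 / q) := by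
  obtain ⟨C, hC, hbound⟩ := exists_strongTypeBound_synthesisKernel hψ hq
  have hconst : (C * a) ^ (1 / q) ≠ ⊤ := by
    have : 0 ≤ 1 / q := by positivity
    finiteness
  refine ⟨((C * a) ^ (1 / q)).toReal + 1, by positivity, fun g hg hga f hfs hf => ?_⟩
  by_cases hfin : ∫⁻ r, (∑' k : ℤ, (‖f k r‖₊ : ℝ≥0∞) ^ 2) ^ (q / 2) = ⊤
  · rw [hfin, ENNReal.top_rpow_of_pos (by positivity),
      ENNReal.mul_top (ENNReal.ofReal_pos.2 (by positivity)).ne']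
    exact le_top
  simp only [hφ, integral_dilate_mul_exp_eq]
  refine (eLpNorm_tsum_convolution_foliation_le hq hbound hg hga hfs hf hfin).trans ?_
  gcongr
  exact (ENNReal.le_ofReal_iff_toReal_le hconst (by positivity)).2
    (le_add_of_nonneg_right zero_le_one)

/-- Synthesis (dual) estimate (3.12) for the adapted Littlewood–Paley projections along the
Lipschitz curves of the foliation `(x,y) ↦ (g(x,y), y)`: the `L^q` norm of the sum
`Σ_k P̃_k F_k` is controlled by the `L^q` norm of the square function of the family `(f_k)`. -/
theorem stmt7 (q : ℝ) (hq : 1 < q) (a0 : ℝ) (ha0 : 1 ≤ a0) (ψ0 : SchwartzMap ℝ ℝ)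
    (hsupp : ∀ t : ℝ, ψ0 t ≠ 0 → 1 / 2 ≤ |t| ∧ |t| ≤ 5 / 2)
    (hsum : ∀ t : ℝ, t ≠ 0 → ∑' k : ℤ, ψ0 ((2 : ℝ) ^ (-k) * t) = 1)
    (φ : ℤ → ℝ → ℂ)
    (hφ : ∀ (k : ℤ) (y : ℝ), φ k y =
      ∫ t : ℝ, (ψ0 ((2 : ℝ) ^ (-k) * t) : ℂ) *
        Complex.exp (2 * (Real.pi : ℂ) * Complex.I * (t : ℂ) * (y : ℂ))) :
    ∃ C : ℝ, 0 < C ∧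
    ∀ b0 : ℝ, 0 < b0 → ∀ g : ℝ × ℝ → ℝ,
    (∀ x x' y : ℝ, x < x' →
      (x' - x) / a0 ≤ g (x', y) - g (x, y) ∧ g (x', y) - g (x, y) ≤ a0 * (x' - x)) →
    (∀ x y y' : ℝ, |g (x, y) - g (x, y')| ≤ b0 * |y - y'|) →
    ∀ f : ℤ → ℝ × ℝ → ℂ, (Function.support f).Finite → (∀ k : ℤ, Measurable (f k)) →
    (∫⁻ r : ℝ × ℝ, (∑' k : ℤ, (‖f k r‖₊ : ENNReal) ^ 2) ^ (q / 2)) ^ (1 / q) < ⊤ →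
      eLpNorm (fun r : ℝ × ℝ =>
          ∑' k : ℤ, ∫ z : ℝ, φ k (r.2 - z) * f k (g (r.1, z), z))
        (ENNReal.ofReal q) volume ≤
        ENNReal.ofReal C *
          (∫⁻ r : ℝ × ℝ, (∑' k : ℤ, (‖f k r‖₊ : ENNReal) ^ 2) ^ (q / 2)) ^ (1 / q) := by
  have ha0' : 0 < a0 := zero_lt_one.trans_le ha0
  have hψ0 : ψ0 0 = 0 := by
    by_contra h
    exact absurd (hsupp 0 h).1 (by norm_num)
  obtain ⟨C, hC, hbound⟩ := stmt7_general hq (SchwartzMap.postcompCLM Complex.ofRealCLM ψ0)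
    (congrArg Complex.ofReal hψ0) φ hφ a0.toNNReal
  exact ⟨C, hC, fun b0 hb0 g hg hg' f hfs hf _ => hbound g
    (continuous_of_foliation ha0' hb0.le hg hg').measurable
    (antilipschitzWith_of_foliation ha0' fun x x' y hx => (hg x x' y hx).1) f hfs hf⟩
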